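/- arXiv:1008.3097 — 8 statements merged into one kernel-verified Lean document; each statement's English description precedes it below -/
import Mathlib

section
/- Let ε ∈ (0,1) and z ∈ (4π/(3−2ε), 4π]. Then 0 ≤ y(z) < z^{3/2}. Moreover, the integrand 36π − 27(1−ε) y(z)^{2/3} − 9ε x^{2/3} is strictly positive for x ∈ [0, y(z)), the integrand 36π − 18(1−ε) y(z) x^{−1/3} − 9 x^{2/3} is strictly positive for x ∈ [y(z), z^{3/2}) and vanishes at x = z^{3/2}, and γ(z) is finite; i.e. the (improper) integrals defining γ(z) converge. -/
open Real MeasureTheory Set Filter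

/-- `y(z) = z^{1/2}(4π − z)/(2(1−ε))`. -/
noncomputable def yFn (ε z : ℝ) : ℝ := z ^ (1/2 : ℝ) * (4 * π - z) / (2 * (1 - ε))

/-- The comparison function `γ` from the proof of the equality case of Bray's
volume comparison theorem. -/
noncomputable def gammaFn (ε z : ℝ) : ℝ :=
  if z ≤ 4 * π / (3 - 2 * ε) then
    ∫ x in (0:ℝ)..(z ^ (3/2 : ℝ)), (9 * ε * z - 9 * ε * x ^ (2/3 : ℝ)) ^ (-(1/2) : ℝ)
  else
    (∫ x in (0:ℝ)..(yFn ε z),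
        (36 * π - 27 * (1 - ε) * (yFn ε z) ^ (2/3 : ℝ) - 9 * ε * x ^ (2/3 : ℝ)) ^ (-(1/2) : ℝ)) +
    (∫ x in (yFn ε z)..(z ^ (3/2 : ℝ)),
        (36 * π - 18 * (1 - ε) * (yFn ε z) * x ^ (-(1/3) : ℝ) - 9 * x ^ (2/3 : ℝ)) ^ (-(1/2) : ℝ))


lemma core_w (p a s w : ℝ) (hp : 0 < p) (ha : 0 < a) (ha1 : a < 1) (hs : 0 < s)
    (hw : 0 ≤ w) (h : 2 * a * w ^ 3 = s * (p - s ^ 2)) (h1 : p < (1 + 2 * a) * s ^ 2) :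
    (1 + 2 * a) * w ^ 2 < p := by
  by_contra hc
  push Not at hc
  obtain ⟨r, hr, hrp⟩ : ∃ r : ℝ, 0 < r ∧ p = (1 + 2 * a) * r ^ 2 := by
    refine ⟨Real.sqrt (p / (1 + 2 * a)), by positivity, ?_⟩
    rw [Real.sq_sqrt (by positivity)]
    field_simp
  have hb : 0 < 1 + 2 * a := by positivity
  rw [hrp] at hc h1
  have hrw : r ≤ w := by
    have := le_of_mul_le_mul_left hc hb
    exact (pow_le_pow_iff_left₀ hr.le hw two_ne_zero).1 this
  have hrs : r < s := by
    have := lt_of_mul_lt_mul_left h1 hb.le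
    exact (pow_lt_pow_iff_left₀ hr.le hs.le two_ne_zero).1 this
  have h3 : r ^ 3 ≤ w ^ 3 := pow_le_pow_left₀ hr.le hrw 3
  have h4 : 2 * a * r ^ 3 ≤ 2 * a * w ^ 3 := by gcongr
  have h5 : 0 < s ^ 2 + s * r - 2 * a * r ^ 2 := by
    nlinarith [mul_pos hr (sub_pos.2 hrs), mul_pos hs (sub_pos.2 hrs),
      mul_pos (sub_pos.2 ha1) (pow_pos hr 2)]
  have h6 := mul_pos (sub_pos.2 hrs) h5
  rw [hrp] at h
  nlinarith

lemma core_k (p a s w : ℝ) (hp : 0 < p) (ha : 0 < a) (ha1 : a < 1) (hs : 0 < s)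
    (hw : 0 ≤ w) (hws : w < s) (h : 2 * a * w ^ 3 = s * (p - s ^ 2))
    (h2 : (1 + 2 * a) * w ^ 2 < p) :
    ∃ k : ℝ, 0 < k ∧ ∀ u, w ≤ u → u < s →
      k * (s ^ 3 - u ^ 3) ≤ 9 * p - 18 * a * w ^ 3 * u⁻¹ - 9 * u ^ 2 := by
  rcases hw.eq_or_lt with rfl | hw
  · have hps : p = s ^ 2 := by
      have : s * (p - s ^ 2) = 0 := by rw [← h]; ring
      rcases mul_eq_zero.1 this with h | h <;> linarith
    refine ⟨3 / s, by positivity, fun u hu hus => ?_⟩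
    have e : 3 / s * (s ^ 3 - u ^ 3) = 3 * (s ^ 3 - u ^ 3) / s := by ring
    rw [e, div_le_iff₀ hs, hps]
    have : 0 ≤ (s - u) * u * (2 * s - u) := by
      have := sub_pos.2 hus
      have : 0 < 2 * s - u := by linarith
      positivity
    have : 0 ≤ (s - u) * s * (s - u) := by
      have := sub_pos.2 hus
      positivity
    have : 0 ≤ (s - u) * s * u := by
      have := sub_pos.2 hus
      positivity
    nlinarith
  · set m := s ^ 2 + s * w + w ^ 2 - p with hm
    have hmp : 0 < m := by
      have h3 : (s - w) * m = w * (p - (1 + 2 * a) * w ^ 2) := by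
        rw [hm]; linear_combination h
      have h4 : 0 < (s - w) * m := by
        rw [h3]; exact mul_pos hw (sub_pos.2 h2)
      exact pos_of_mul_pos_right h4 (sub_pos.2 hws).le
    refine ⟨3 * m / s ^ 3, by positivity, fun u hu hus => ?_⟩
    have hu0 : 0 < u := hw.trans_le hu
    have hd := sub_pos.2 hus
    have e : 9 * p - 18 * a * w ^ 3 * u⁻¹ - 9 * u ^ 2
        = 9 * (s - u) * (s ^ 2 + s * u + u ^ 2 - p) / u := by
      field_simp
      linear_combination (-9) * h
    rw [e, div_mul_eq_mul_div, div_le_div_iff₀ (by positivity) hu0]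
    have hmu : m ≤ s ^ 2 + s * u + u ^ 2 - p := by
      rw [hm]; nlinarith
    have hq : s ^ 2 + s * u + u ^ 2 ≤ 3 * s ^ 2 := by nlinarith
    calc 3 * m * (s ^ 3 - u ^ 3) * u
        = 3 * (s - u) * (m * (s ^ 2 + s * u + u ^ 2) * u) := by ring
      _ ≤ 3 * (s - u) * ((s ^ 2 + s * u + u ^ 2 - p) * (3 * s ^ 2) * s) := by
          have : 0 ≤ s ^ 2 + s * u + u ^ 2 - p := hmp.le.trans hmu
          gcongr
      _ = _ := by ring

lemma rp (x : ℝ) (hx : 0 ≤ x) : ∃ u : ℝ, 0 ≤ u ∧ x = u ^ 3 ∧ x ^ (2/3 : ℝ) = u ^ 2 ∧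
    x ^ (-(1/3) : ℝ) = u⁻¹ := by
  refine ⟨x ^ (1/3 : ℝ), by positivity, ?_, ?_, ?_⟩
  · rw [← Real.rpow_natCast, ← Real.rpow_mul hx]; norm_num
  · rw [← Real.rpow_natCast, ← Real.rpow_mul hx]; norm_num
  · rw [Real.rpow_neg hx]

/-- For `ε ∈ (0,1)` and `z ∈ (4π/(3−2ε), 4π]`: `0 ≤ y(z) < z^{3/2}`, the first integrand is
positive on `[0, y(z))`, the second integrand is positive on `[y(z), z^{3/2})` and vanishes at
`x = z^{3/2}`, and both (improper) integrals defining `γ(z)` converge. -/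
theorem stmt_2 (ε z : ℝ) (hε : ε ∈ Set.Ioo (0:ℝ) 1)
    (hz : z ∈ Set.Ioc (4 * π / (3 - 2 * ε)) (4 * π)) :
    0 ≤ yFn ε z ∧ yFn ε z < z ^ (3/2 : ℝ) ∧
    (∀ x ∈ Set.Ico (0:ℝ) (yFn ε z),
      0 < 36 * π - 27 * (1 - ε) * (yFn ε z) ^ (2/3 : ℝ) - 9 * ε * x ^ (2/3 : ℝ)) ∧
    (∀ x ∈ Set.Ico (yFn ε z) (z ^ (3/2 : ℝ)),
      0 < 36 * π - 18 * (1 - ε) * (yFn ε z) * x ^ (-(1/3) : ℝ) - 9 * x ^ (2/3 : ℝ)) ∧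
    36 * π - 18 * (1 - ε) * (yFn ε z) * (z ^ (3/2 : ℝ)) ^ (-(1/3) : ℝ)
      - 9 * (z ^ (3/2 : ℝ)) ^ (2/3 : ℝ) = 0 ∧
    IntervalIntegrable
      (fun x => (36 * π - 27 * (1 - ε) * (yFn ε z) ^ (2/3 : ℝ)
        - 9 * ε * x ^ (2/3 : ℝ)) ^ (-(1/2) : ℝ)) volume 0 (yFn ε z) ∧
    IntervalIntegrable
      (fun x => (36 * π - 18 * (1 - ε) * (yFn ε z) * x ^ (-(1/3) : ℝ)
        - 9 * x ^ (2/3 : ℝ)) ^ (-(1/2) : ℝ)) volume (yFn ε z) (z ^ (3/2 : ℝ)) := by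
  obtain ⟨hε0, hε1⟩ := hε
  obtain ⟨hz1, hz2⟩ := hz
  have hπ := Real.pi_pos
  have hb : 0 < 3 - 2 * ε := by linarith
  have hz0 : 0 < z := lt_trans (by positivity) hz1
  rw [div_lt_iff₀ hb] at hz1
  have ha : 0 < 1 - ε := by linarith
  have ha1 : 1 - ε < 1 := by linarith
  obtain ⟨s, hs, hsz, hs1⟩ : ∃ s : ℝ, 0 < s ∧ z = s ^ 2 ∧ z ^ (1/2 : ℝ) = s := by
    refine ⟨z ^ (1/2 : ℝ), by positivity, ?_, rfl⟩
    rw [← Real.rpow_natCast, ← Real.rpow_mul hz0.le]; norm_num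
  have hs3 : z ^ (3/2 : ℝ) = s ^ 3 := by
    rw [← hs1, ← Real.rpow_natCast, ← Real.rpow_mul hz0.le]; norm_num
  have hy0 : 0 ≤ yFn ε z := by
    unfold yFn
    have : 0 ≤ 4 * π - z := by linarith
    positivity
  have hy : 2 * (1 - ε) * yFn ε z = s * (4 * π - s ^ 2) := by
    unfold yFn
    rw [hs1, hsz]
    field_simp
  rw [hs3]
  generalize yFn ε z = y at *
  obtain ⟨w, hw, rfl, hy2, -⟩ := rp y hy0
  have h1 : 4 * π < (1 + 2 * (1 - ε)) * s ^ 2 := by rw [← hsz]; linarith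
  have hws3 : w ^ 3 < s ^ 3 := by
    have : 2 * (1 - ε) * w ^ 3 < 2 * (1 - ε) * s ^ 3 := by
      rw [hy]; nlinarith
    exact lt_of_mul_lt_mul_left this (by positivity)
  have hws : w < s := (pow_lt_pow_iff_left₀ hw hs.le three_ne_zero).1 hws3
  have h2 := core_w (4 * π) (1 - ε) s w (by positivity) ha ha1 hs hw hy h1
  obtain ⟨k, hk, hF⟩ := core_k (4 * π) (1 - ε) s w (by positivity) ha ha1 hs hw hws hy h2
  have hF' : ∀ x, w ^ 3 ≤ x → x < s ^ 3 → k * (s ^ 3 - x) ≤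
      36 * π - 18 * (1 - ε) * w ^ 3 * x ^ (-(1/3) : ℝ) - 9 * x ^ (2/3 : ℝ) := by
    intro x hx hxs
    obtain ⟨u, hu, rfl, e1, e2⟩ := rp x (hy0.trans hx)
    rw [e1, e2]
    have := hF u ((pow_le_pow_iff_left₀ hw hu three_ne_zero).1 hx)
      ((pow_lt_pow_iff_left₀ hu hs.le three_ne_zero).1 hxs)
    linarith
  have hend : 36 * π - 18 * (1 - ε) * w ^ 3 * (s ^ 3) ^ (-(1/3) : ℝ)
      - 9 * (s ^ 3) ^ (2/3 : ℝ) = 0 := by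
    obtain ⟨u, hu, hus, e1, e2⟩ := rp (s ^ 3) (by positivity)
    have : s = u := (pow_left_inj₀ hs.le hu three_ne_zero).1 hus
    subst this
    rw [e1, e2]
    field_simp
    linear_combination (-9) * hy
  have hpos1 : ∀ x, 0 ≤ x → x ≤ w ^ 3 →
      0 < 36 * π - 27 * (1 - ε) * (w ^ 3) ^ (2/3 : ℝ) - 9 * ε * x ^ (2/3 : ℝ) := by
    intro x hx hxw
    have h5 : x ^ (2/3 : ℝ) ≤ (w ^ 3) ^ (2/3 : ℝ) := by gcongr
    rw [hy2] at *
    nlinarith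
  refine ⟨hy0, hws3, fun x hx => hpos1 x hx.1 hx.2.le, fun x hx => ?_, hend, ?_, ?_⟩
  · exact lt_of_lt_of_le (mul_pos hk (sub_pos.2 hx.2)) (hF' x hx.1 hx.2)
  · apply ContinuousOn.intervalIntegrable
    rw [uIcc_of_le hy0]
    apply ContinuousOn.rpow_const
    · apply Continuous.continuousOn
      have : Continuous fun x : ℝ => x ^ (2/3 : ℝ) :=
        Real.continuous_rpow_const (by norm_num)
      fun_prop
    · intro x hx
      exact Or.inl (hpos1 x hx.1 hx.2).ne'
  · have hg : IntervalIntegrable (fun x : ℝ => k ^ (-(1/2) : ℝ) * (s ^ 3 - x) ^ (-(1/2) : ℝ))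
        volume (w ^ 3) (s ^ 3) := by
      apply IntervalIntegrable.const_mul
      have := (intervalIntegral.intervalIntegrable_rpow' (a := s ^ 3 - w ^ 3) (b := 0)
        (r := -(1/2)) (by norm_num)).comp_sub_left (s ^ 3)
      simpa using this
    refine hg.mono_fun' (Measurable.aestronglyMeasurable (by fun_prop)) ?_
    rw [uIoc_of_le hws3.le]
    refine (ae_restrict_iff' measurableSet_Ioc).2 (Eventually.of_forall fun x hx => ?_)
    rcases hx.2.eq_or_lt with rfl | hlt
    · simp only
      rw [hend]
      simp
    · have h7 := hF' x hx.1.le hlt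
      have h8 := mul_pos hk (sub_pos.2 hlt)
      simp only
      rw [Real.norm_of_nonneg (Real.rpow_nonneg (h8.le.trans h7) _),
        ← Real.mul_rpow hk.le (sub_pos.2 hlt).le]
      exact Real.rpow_le_rpow_of_nonpos h8 h7 (by norm_num)
end

section
/- For every ε ∈ (0,1), the function γ : (0, 4π] → ℝ is continuous. In particular, the two defining formulas agree at the junction point z = 4π/(3−2ε), where y(z) = z^{3/2} and both formulas give γ(z) = ∫₀^{z^{3/2}} (9εz − 9ε x^{2/3})^{−1/2} dx. -/
open Real MeasureTheory Set Filter

lemma aux_h (c s y P x : ℝ) (hc0 : 0 < c) (hc1 : c < 1) (hs : 0 < s) (hy : 0 ≤ y)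
    (hyx : y ≤ x) (hx : 0 < x) (hxs : x ≤ s ^ 3) (hP : 2 * c * y = s * (P - s ^ 2)) :
    3 * (1 - c) * (s ^ 3 - x) / s ≤
      9 * P - 18 * c * y * x ^ (-(1/3) : ℝ) - 9 * x ^ (2/3 : ℝ) := by
  obtain ⟨w, hw, rfl⟩ : ∃ w : ℝ, 0 < w ∧ x = w ^ 3 := by
    refine ⟨x ^ (1/3 : ℝ), by positivity, ?_⟩
    rw [← Real.rpow_natCast, ← Real.rpow_mul hx.le]; norm_num
  have e1 : (w ^ 3) ^ (-(1/3) : ℝ) = w⁻¹ := by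
    rw [← Real.rpow_natCast, ← Real.rpow_mul hw.le, ← Real.rpow_neg_one]; norm_num
  have e2 : (w ^ 3) ^ (2/3 : ℝ) = w ^ 2 := by
    rw [← Real.rpow_natCast, ← Real.rpow_natCast, ← Real.rpow_mul hw.le]; norm_num
  rw [e1, e2]
  have hws : w ≤ s := le_of_pow_le_pow_left₀ (by norm_num) hs.le hxs
  have e3 : 9 * P = 9 * s ^ 2 + 18 * c * y / s := by
    field_simp; linarith
  have e4 : 9 * P - 18 * c * y * w⁻¹ - 9 * w ^ 2
      = (s - w) * (9 * (s + w) - 18 * c * (y / (s * w))) := by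
    rw [e3]; field_simp; ring
  rw [e4]
  have h5 : y / (s * w) ≤ w := by
    rw [div_le_iff₀ (by positivity)]
    nlinarith [mul_le_mul_of_nonneg_left hws (sq_nonneg w)]
  have h6 : 9 * (1 - c) * s ≤ 9 * (s + w) - 18 * c * (y / (s * w)) := by
    have := mul_le_mul_of_nonneg_left h5 hc0.le
    nlinarith
  have h7 : 3 * (1 - c) * (s ^ 3 - w ^ 3) / s ≤ (s - w) * (9 * (1 - c) * s) := by
    rw [div_le_iff₀ hs]
    have : (s - w) * (s ^ 2 + s * w + w ^ 2) ≤ (s - w) * (3 * s ^ 2) :=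
      mul_le_mul_of_nonneg_left (by nlinarith) (by linarith)
    nlinarith [mul_le_mul_of_nonneg_left this (by linarith : 0 ≤ 3 * (1 - c))]
  exact h7.trans (mul_le_mul_of_nonneg_left h6 (by linarith))

lemma aux_a (c s y P t : ℝ) (hc0 : 0 < c) (hc1 : c < 1) (hs : 0 < s) (hy : 0 ≤ y)
    (hys : y ≤ s ^ 3) (ht0 : 0 < t) (ht1 : t < 1) (hP : 2 * c * y = s * (P - s ^ 2)) :
    3 * (1 - c) * y ^ (2/3 : ℝ) * (1 - t) ≤
      9 * P - 27 * c * y ^ (2/3 : ℝ) - 9 * (1 - c) * (y * t) ^ (2/3 : ℝ) := by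
  rw [Real.mul_rpow hy ht0.le]
  obtain ⟨w, hw, rfl⟩ : ∃ w : ℝ, 0 ≤ w ∧ y = w ^ 3 := by
    refine ⟨y ^ (1/3 : ℝ), by positivity, ?_⟩
    rw [← Real.rpow_natCast, ← Real.rpow_mul hy]; norm_num
  obtain ⟨u, hu, rfl⟩ : ∃ w : ℝ, 0 < w ∧ t = w ^ 3 := by
    refine ⟨t ^ (1/3 : ℝ), by positivity, ?_⟩
    rw [← Real.rpow_natCast, ← Real.rpow_mul ht0.le]; norm_num
  have e1 : (w ^ 3) ^ (2/3 : ℝ) = w ^ 2 := by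
    rw [← Real.rpow_natCast, ← Real.rpow_natCast, ← Real.rpow_mul hw]; norm_num
  have e2 : (u ^ 3) ^ (2/3 : ℝ) = u ^ 2 := by
    rw [← Real.rpow_natCast, ← Real.rpow_natCast, ← Real.rpow_mul hu.le]; norm_num
  rw [e1, e2]
  have hws : w ≤ s := le_of_pow_le_pow_left₀ (by norm_num) hs.le hys
  have hu1 : u < 1 := by
    by_contra h
    push Not at h
    exact absurd ht1 (not_lt.2 (one_le_pow₀ h))
  have k1 : (1 + 2 * c) * w ^ 2 ≤ P := by
    have : 0 ≤ (s - w) * (s ^ 2 + s * w - 2 * c * w ^ 2) := by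
      apply mul_nonneg (by linarith)
      nlinarith [mul_le_mul_of_nonneg_left hc1.le (sq_nonneg w)]
    have : 0 ≤ s * (P - (1 + 2 * c) * w ^ 2) := by nlinarith
    have := nonneg_of_mul_nonneg_right this hs
    linarith
  have k2 : 1 - u ^ 3 ≤ 3 * (1 - u ^ 2) := by nlinarith [mul_pos hu hu, mul_pos hu (sub_pos.2 hu1)]
  have k3 : 0 ≤ 3 * (1 - c) * w ^ 2 := by
    have : 0 < 1 - c := by linarith
    positivity
  nlinarith [mul_le_mul_of_nonneg_left k2 k3]

/-- turning a lower bound of the base into an upper bound -/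
lemma aux_rpow (a k b r : ℝ) (ha : 0 ≤ a) (hk : 0 ≤ k) (hr : 0 < r) (hb : a * k * r ≤ b) :
    a * k * b ^ (-(1/2) : ℝ) ≤ (a * k) ^ (1/2 : ℝ) * r ^ (-(1/2) : ℝ) := by
  rcases (mul_nonneg ha hk).eq_or_lt with h | h
  · rw [← h]; simp
  have h1 : b ^ (-(1/2) : ℝ) ≤ (a * k * r) ^ (-(1/2) : ℝ) :=
    Real.rpow_le_rpow_of_nonpos (by positivity) hb (by norm_num)
  calc a * k * b ^ (-(1/2) : ℝ) ≤ a * k * (a * k * r) ^ (-(1/2) : ℝ) := by gcongr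
    _ = (a * k) ^ (1 : ℝ) * (a * k) ^ (-(1/2) : ℝ) * r ^ (-(1/2) : ℝ) := by
      rw [Real.mul_rpow h.le hr.le, Real.rpow_one]; ring
    _ = _ := by rw [← Real.rpow_add h]; norm_num

lemma int_bound (C : ℝ) :
    IntervalIntegrable (fun t : ℝ => C * (1 - t) ^ (-(1/2) : ℝ)) volume 0 1 := by
  apply IntervalIntegrable.const_mul
  have := (intervalIntegral.intervalIntegrable_rpow' (a := 0) (b := 1)
    (r := (-(1/2) : ℝ)) (by norm_num)).comp_sub_left 1
  simpa using this.symm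

lemma zfacts (ε : ℝ) (hε : ε ∈ Set.Ioo (0:ℝ) 1) (z : ℝ)
    (hz : z ∈ Set.Icc (4 * π / (3 - 2 * ε)) (4 * π)) :
    0 < z ∧ 0 < z ^ (1/2 : ℝ) ∧ z ^ (3/2 : ℝ) = (z ^ (1/2 : ℝ)) ^ 3 ∧ 0 ≤ yFn ε z ∧
    yFn ε z ≤ (z ^ (1/2 : ℝ)) ^ 3 ∧
    2 * (1 - ε) * yFn ε z = z ^ (1/2 : ℝ) * (4 * π - (z ^ (1/2 : ℝ)) ^ 2) := by
  obtain ⟨h0, h1⟩ := hε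
  obtain ⟨ha, hb⟩ := hz
  have hd : 0 < 3 - 2 * ε := by linarith
  have hc : 0 < 1 - ε := by linarith
  have hz : 0 < z := lt_of_lt_of_le (by positivity) ha
  rw [div_le_iff₀ hd] at ha
  have hs : 0 < z ^ (1/2 : ℝ) := by positivity
  have e : (z ^ (1/2 : ℝ)) ^ 2 = z := by
    rw [← Real.rpow_natCast, ← Real.rpow_mul hz.le]; norm_num
  have e3 : z ^ (3/2 : ℝ) = (z ^ (1/2 : ℝ)) ^ 3 := by
    rw [← Real.rpow_natCast, ← Real.rpow_mul hz.le]; norm_num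
  refine ⟨hz, hs, e3, ?_, ?_, ?_⟩
  · unfold yFn
    have : 0 ≤ 4 * π - z := by linarith
    positivity
  · unfold yFn
    rw [div_le_iff₀ (by positivity), pow_succ, e]
    nlinarith
  · rw [e]; unfold yFn; field_simp

lemma yFn_cont (ε : ℝ) : Continuous (yFn ε) := by
  unfold yFn
  have : Continuous fun z : ℝ => z ^ (1/2 : ℝ) := Real.continuous_rpow_const (by norm_num)
  fun_prop

lemma F1_cont (ε : ℝ) (hε : ε ∈ Set.Ioo (0:ℝ) 1) :
    ContinuousOn (fun z : ℝ => ∫ x in (0:ℝ)..(z ^ (3/2 : ℝ)),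
      (9 * ε * z - 9 * ε * x ^ (2/3 : ℝ)) ^ (-(1/2) : ℝ)) (Set.Ioi 0) := by
  have key : ∀ z ∈ Set.Ioi (0:ℝ), (∫ x in (0:ℝ)..(z ^ (3/2 : ℝ)),
      (9 * ε * z - 9 * ε * x ^ (2/3 : ℝ)) ^ (-(1/2) : ℝ)) =
      z ^ (3/2 : ℝ) * ((9 * ε * z) ^ (-(1/2) : ℝ) *
        ∫ t in (0:ℝ)..1, (1 - t ^ (2/3 : ℝ)) ^ (-(1/2) : ℝ)) := by
    intro z hz
    have hz : 0 < z := hz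
    have := hε.1
    have h := intervalIntegral.mul_integral_comp_mul_left (a := 0) (b := 1)
      (f := fun x : ℝ => (9 * ε * z - 9 * ε * x ^ (2/3 : ℝ)) ^ (-(1/2) : ℝ)) (z ^ (3/2 : ℝ))
    rw [mul_zero, mul_one] at h
    rw [← h, ← intervalIntegral.integral_const_mul ((9 * ε * z) ^ (-(1/2) : ℝ))]
    congr 1
    apply intervalIntegral.integral_congr
    intro t ht
    rw [Set.uIcc_of_le zero_le_one] at ht
    have e : (z ^ (3/2 : ℝ)) ^ (2/3 : ℝ) = z := by
      rw [← Real.rpow_mul hz.le]; norm_num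
    have : 0 ≤ 1 - t ^ (2/3 : ℝ) := by
      have := Real.rpow_le_one ht.1 ht.2 (by norm_num : (0:ℝ) ≤ 2/3)
      linarith
    dsimp only
    rw [Real.mul_rpow (by positivity) ht.1, e, ← Real.mul_rpow (by positivity) this]
    congr 1; ring
  refine ContinuousOn.congr ?_ key
  intro z hz
  have hz : 0 < z := hz
  have := hε.1
  apply ContinuousAt.continuousWithinAt
  have h1 : ContinuousAt (fun z : ℝ => z ^ (3/2 : ℝ)) z :=
    Real.continuousAt_rpow_const _ _ (Or.inl hz.ne')
  have h2 : ContinuousAt (fun z : ℝ => (9 * ε * z) ^ (-(1/2) : ℝ)) z :=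
    ContinuousAt.rpow_const (by fun_prop) (Or.inl (by positivity))
  exact h1.mul (h2.mul continuousAt_const)

lemma ae_ne_one : ∀ᵐ t : ℝ, t ≠ 1 := by
  simp [ae_iff, measure_singleton]

lemma F2a_cont (ε : ℝ) (hε : ε ∈ Set.Ioo (0:ℝ) 1) :
    ContinuousOn (fun z : ℝ => ∫ x in (0:ℝ)..(yFn ε z),
        (36 * π - 27 * (1 - ε) * (yFn ε z) ^ (2/3 : ℝ) - 9 * ε * x ^ (2/3 : ℝ)) ^ (-(1/2) : ℝ))
      (Set.Icc (4 * π / (3 - 2 * ε)) (4 * π)) := by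
  have key : ∀ z ∈ Set.Icc (4 * π / (3 - 2 * ε)) (4 * π), (∫ x in (0:ℝ)..(yFn ε z),
      (36 * π - 27 * (1 - ε) * (yFn ε z) ^ (2/3 : ℝ) - 9 * ε * x ^ (2/3 : ℝ)) ^ (-(1/2) : ℝ)) =
      ∫ t in (0:ℝ)..1, yFn ε z * (36 * π - 27 * (1 - ε) * (yFn ε z) ^ (2/3 : ℝ)
        - 9 * ε * (yFn ε z * t) ^ (2/3 : ℝ)) ^ (-(1/2) : ℝ) := by
    intro z _
    have h := intervalIntegral.mul_integral_comp_mul_left (a := 0) (b := 1)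
      (f := fun x : ℝ => (36 * π - 27 * (1 - ε) * (yFn ε z) ^ (2/3 : ℝ)
        - 9 * ε * x ^ (2/3 : ℝ)) ^ (-(1/2) : ℝ)) (yFn ε z)
    rw [mul_zero, mul_one] at h
    rw [← h, ← intervalIntegral.integral_const_mul]
  refine ContinuousOn.congr ?_ key
  intro z₀ hz₀
  have hε0 := hε.1
  have hε1 := hε.2
  have base : ∀ z ∈ Set.Icc (4 * π / (3 - 2 * ε)) (4 * π), ∀ t : ℝ, 0 < t → t < 1 →
      3 * ε * (yFn ε z) ^ (2/3 : ℝ) * (1 - t) ≤ 36 * π - 27 * (1 - ε) * (yFn ε z) ^ (2/3 : ℝ)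
        - 9 * ε * (yFn ε z * t) ^ (2/3 : ℝ) := by
    intro z hz t ht0 ht1
    obtain ⟨_, h2, _, h4, h5, h6⟩ := zfacts ε hε z hz
    have := aux_a (1 - ε) _ _ _ t (by linarith) (by linarith) h2 h4 h5 ht0 ht1 h6
    convert this using 1 <;> ring
  apply intervalIntegral.continuousWithinAt_of_dominated_interval
    (bound := fun t =>
      ((((4 * π) ^ (1/2 : ℝ)) ^ 3) ^ (1/3 : ℝ) * ((3 * ε)⁻¹ *
      ((3 * ε * (((4 * π) ^ (1/2 : ℝ)) ^ 3) ^ (2/3 : ℝ))) ^ (1/2 : ℝ))) * (1 - t) ^ (-(1/2) : ℝ))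
  · refine Eventually.of_forall fun z => ?_
    apply Measurable.aestronglyMeasurable
    fun_prop
  · filter_upwards [self_mem_nhdsWithin] with z hz
    filter_upwards [ae_ne_one] with t ht1 ht
    rw [Set.uIoc_of_le zero_le_one] at ht
    have ht1 : t < 1 := lt_of_le_of_ne ht.2 ht1
    have hb := base z hz t ht.1 ht1
    obtain ⟨h1, h2, _, h4, h5, h6⟩ := zfacts ε hε z hz
    have h7 : 0 ≤ 36 * π - 27 * (1 - ε) * (yFn ε z) ^ (2/3 : ℝ)
        - 9 * ε * (yFn ε z * t) ^ (2/3 : ℝ) := le_trans (by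
          have : 0 < 1 - t := by linarith
          positivity) hb
    rw [Real.norm_of_nonneg (mul_nonneg h4 (Real.rpow_nonneg h7 _))]
    have h8 := aux_rpow (3 * ε) ((yFn ε z) ^ (2/3 : ℝ)) _ (1 - t) (by positivity) (by positivity)
      (by linarith) hb
    have hy : yFn ε z = (yFn ε z) ^ (1/3 : ℝ) * (yFn ε z) ^ (2/3 : ℝ) := by
      rw [← Real.rpow_add_of_nonneg h4 (by norm_num) (by norm_num)]; norm_num
    have h9 : yFn ε z ≤ ((4 * π) ^ (1/2 : ℝ)) ^ 3 := by
      refine h5.trans ?_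
      have := hz.2
      gcongr
    have h10 : 0 ≤ (1 - t) ^ (-(1/2) : ℝ) := Real.rpow_nonneg (by linarith) _
    generalize (36 * π - 27 * (1 - ε) * (yFn ε z) ^ (2/3 : ℝ)
        - 9 * ε * (yFn ε z * t) ^ (2/3 : ℝ)) ^ (-(1/2) : ℝ) = B at *
    calc yFn ε z * B = (yFn ε z) ^ (1/3 : ℝ) * ((3 * ε)⁻¹ *
          (3 * ε * (yFn ε z) ^ (2/3 : ℝ) * B)) := by
          nth_rw 1 [hy]; field_simp
      _ ≤ (yFn ε z) ^ (1/3 : ℝ) * ((3 * ε)⁻¹ *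
          ((3 * ε * (yFn ε z) ^ (2/3 : ℝ)) ^ (1/2 : ℝ) * (1 - t) ^ (-(1/2) : ℝ))) := by gcongr
      _ = (yFn ε z) ^ (1/3 : ℝ) * ((3 * ε)⁻¹ *
          (3 * ε * (yFn ε z) ^ (2/3 : ℝ)) ^ (1/2 : ℝ)) * (1 - t) ^ (-(1/2) : ℝ) := by ring
      _ ≤ _ := by gcongr
  · exact int_bound _
  · filter_upwards [ae_ne_one] with t ht1 ht
    rw [Set.uIoc_of_le zero_le_one] at ht
    have ht1 : t < 1 := lt_of_le_of_ne ht.2 ht1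
    have hb := base z₀ hz₀ t ht.1 ht1
    obtain ⟨h1, h2, _, h4, h5, h6⟩ := zfacts ε hε z₀ hz₀
    apply ContinuousAt.continuousWithinAt
    have hc := (yFn_cont ε).continuousAt (x := z₀)
    refine hc.mul (ContinuousAt.rpow_const ?_ (Or.inl ?_))
    · have k1 : ContinuousAt (fun z => (yFn ε z) ^ (2/3 : ℝ)) z₀ :=
        hc.rpow_const (Or.inr (by norm_num))
      have k2 : ContinuousAt (fun z => (yFn ε z * t) ^ (2/3 : ℝ)) z₀ :=
        (hc.mul continuousAt_const).rpow_const (Or.inr (by norm_num))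
      fun_prop
    · rcases h4.eq_or_lt with h | h
      · rw [← h]; norm_num
      · refine (lt_of_lt_of_le ?_ hb).ne'
        have : 0 < 1 - t := by linarith
        positivity

lemma F2b_cont (ε : ℝ) (hε : ε ∈ Set.Ioo (0:ℝ) 1) :
    ContinuousOn (fun z : ℝ => ∫ x in (yFn ε z)..(z ^ (3/2 : ℝ)),
        (36 * π - 18 * (1 - ε) * (yFn ε z) * x ^ (-(1/3) : ℝ) - 9 * x ^ (2/3 : ℝ)) ^ (-(1/2) : ℝ))
      (Set.Icc (4 * π / (3 - 2 * ε)) (4 * π)) := by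
  set D : ℝ → ℝ := fun z => z ^ (3/2 : ℝ) - yFn ε z with hD
  set X : ℝ → ℝ → ℝ := fun z t => D z * t + yFn ε z with hX
  set H : ℝ → ℝ → ℝ := fun z t => 36 * π - 18 * (1 - ε) * (yFn ε z) * (X z t) ^ (-(1/3) : ℝ)
    - 9 * (X z t) ^ (2/3 : ℝ) with hH
  have key : ∀ z ∈ Set.Icc (4 * π / (3 - 2 * ε)) (4 * π), (∫ x in (yFn ε z)..(z ^ (3/2 : ℝ)),
        (36 * π - 18 * (1 - ε) * (yFn ε z) * x ^ (-(1/3) : ℝ)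
          - 9 * x ^ (2/3 : ℝ)) ^ (-(1/2) : ℝ)) =
      ∫ t in (0:ℝ)..1, D z * (H z t) ^ (-(1/2) : ℝ) := by
    intro z _
    have h := intervalIntegral.mul_integral_comp_mul_add (a := 0) (b := 1)
      (f := fun x : ℝ => (36 * π - 18 * (1 - ε) * (yFn ε z) * x ^ (-(1/3) : ℝ)
          - 9 * x ^ (2/3 : ℝ)) ^ (-(1/2) : ℝ)) (D z) (yFn ε z)
    rw [mul_zero, mul_one, zero_add, show D z + yFn ε z = z ^ (3/2 : ℝ) by simp [hD]] at h
    rw [← h, ← intervalIntegral.integral_const_mul]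
  refine ContinuousOn.congr ?_ key
  intro z₀ hz₀
  have hε0 := hε.1
  have hε1 := hε.2
  have hDc : Continuous D := by
    have : Continuous fun z : ℝ => z ^ (3/2 : ℝ) := Real.continuous_rpow_const (by norm_num)
    exact this.sub (yFn_cont ε)
  have hD0 : ∀ z ∈ Set.Icc (4 * π / (3 - 2 * ε)) (4 * π), 0 ≤ D z := by
    intro z hz
    obtain ⟨_, h2, h3, h4, h5, h6⟩ := zfacts ε hε z hz
    simp only [hD, h3]; linarith
  have hXpos : ∀ z ∈ Set.Icc (4 * π / (3 - 2 * ε)) (4 * π), ∀ t : ℝ, 0 < t → t < 1 →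
      0 < X z t := by
    intro z hz t ht0 ht1
    obtain ⟨h1, h2, h3, h4, h5, h6⟩ := zfacts ε hε z hz
    have hL : 0 < z ^ (3/2 : ℝ) := by positivity
    simp only [hX, hD]
    nlinarith [mul_pos hL ht0, mul_nonneg h4 (sub_pos.2 ht1).le]
  have base : ∀ z ∈ Set.Icc (4 * π / (3 - 2 * ε)) (4 * π), ∀ t : ℝ, 0 < t → t < 1 →
      3 * ε / z ^ (1/2 : ℝ) * D z * (1 - t) ≤ H z t := by
    intro z hz t ht0 ht1
    have hx := hXpos z hz t ht0 ht1
    have hd := hD0 z hz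
    obtain ⟨h1, h2, h3, h4, h5, h6⟩ := zfacts ε hε z hz
    have := aux_h (1 - ε) _ _ _ (X z t) (by linarith) (by linarith) h2 h4
      (by simp only [hX]; nlinarith) hx
      (by rw [← h3]; simp only [hX]; simp only [hD] at *; nlinarith) h6
    rw [← h3] at this
    convert this using 1
    · simp only [hX, hD]; ring
    · simp only [hH]; ring
  have bd : ∀ z ∈ Set.Icc (4 * π / (3 - 2 * ε)) (4 * π), ∀ t : ℝ, 0 < t → t < 1 →
      ‖D z * (H z t) ^ (-(1/2) : ℝ)‖ ≤ (4 * π) ^ (1/2 : ℝ) * (3 * ε)⁻¹ *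
        (3 * ε / (4 * π / (3 - 2 * ε)) ^ (1/2 : ℝ) * D z) ^ (1/2 : ℝ)
          * (1 - t) ^ (-(1/2) : ℝ) := by
    intro z hz t ht0 ht1
    have hb := base z hz t ht0 ht1
    have hd := hD0 z hz
    obtain ⟨h1, h2, h3, h4, h5, h6⟩ := zfacts ε hε z hz
    have h1t : 0 < 1 - t := by linarith
    have h7 : 0 ≤ H z t := le_trans (by positivity) hb
    rw [Real.norm_of_nonneg (mul_nonneg hd (Real.rpow_nonneg h7 _))]
    have h8 := aux_rpow (3 * ε / z ^ (1/2 : ℝ)) (D z) _ (1 - t) (by positivity) hd h1t hb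
    have h32 : 0 < 3 - 2 * ε := by linarith
    have hza := hz.1
    have hzb := hz.2
    calc D z * (H z t) ^ (-(1/2) : ℝ) = z ^ (1/2 : ℝ) * (3 * ε)⁻¹ *
          (3 * ε / z ^ (1/2 : ℝ) * D z * (H z t) ^ (-(1/2) : ℝ)) := by
          field_simp
      _ ≤ z ^ (1/2 : ℝ) * (3 * ε)⁻¹ *
          ((3 * ε / z ^ (1/2 : ℝ) * D z) ^ (1/2 : ℝ) * (1 - t) ^ (-(1/2) : ℝ)) := by gcongr
      _ ≤ (4 * π) ^ (1/2 : ℝ) * (3 * ε)⁻¹ *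
          ((3 * ε / (4 * π / (3 - 2 * ε)) ^ (1/2 : ℝ) * D z) ^ (1/2 : ℝ)
            * (1 - t) ^ (-(1/2) : ℝ)) := by gcongr
      _ = _ := by ring
  have h32 : 0 < 3 - 2 * ε := by linarith
  apply intervalIntegral.continuousWithinAt_of_dominated_interval
    (bound := fun t => (4 * π) ^ (1/2 : ℝ) * (3 * ε)⁻¹ *
        (3 * ε / (4 * π / (3 - 2 * ε)) ^ (1/2 : ℝ) * (4 * π) ^ (3/2 : ℝ)) ^ (1/2 : ℝ)
          * (1 - t) ^ (-(1/2) : ℝ))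
  · refine Eventually.of_forall fun z => ?_
    apply Measurable.aestronglyMeasurable
    simp only [hH, hX]
    fun_prop
  · filter_upwards [self_mem_nhdsWithin] with z hz
    filter_upwards [ae_ne_one] with t ht1 ht
    rw [Set.uIoc_of_le zero_le_one] at ht
    have ht1 : t < 1 := lt_of_le_of_ne ht.2 ht1
    refine (bd z hz t ht.1 ht1).trans ?_
    have hd := hD0 z hz
    have h1t : 0 < 1 - t := by linarith
    obtain ⟨h1, h2, h3, h4, h5, h6⟩ := zfacts ε hε z hz
    have : D z ≤ (4 * π) ^ (3/2 : ℝ) := by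
      have h9 : z ^ (3/2 : ℝ) ≤ (4 * π) ^ (3/2 : ℝ) := by
        have := hz.2
        gcongr
      simp only [hD]; linarith
    gcongr
  · exact int_bound _
  · filter_upwards [ae_ne_one] with t ht1 ht
    rw [Set.uIoc_of_le zero_le_one] at ht
    have ht1 : t < 1 := lt_of_le_of_ne ht.2 ht1
    have h1t : 0 < 1 - t := by linarith
    have hc := (yFn_cont ε).continuousAt (x := z₀)
    rcases (hD0 z₀ hz₀).eq_or_lt with h | h
    · unfold ContinuousWithinAt
      beta_reduce
      rw [← h, zero_mul]
      refine squeeze_zero_norm' (a := fun z => (4 * π) ^ (1/2 : ℝ) * (3 * ε)⁻¹ *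
        (3 * ε / (4 * π / (3 - 2 * ε)) ^ (1/2 : ℝ) * D z) ^ (1/2 : ℝ)
          * (1 - t) ^ (-(1/2) : ℝ)) ?_ ?_
      · filter_upwards [self_mem_nhdsWithin] with z hz
        exact bd z hz t ht.1 ht1
      · have k : ContinuousAt (fun z => (4 * π) ^ (1/2 : ℝ) * (3 * ε)⁻¹ *
          (3 * ε / (4 * π / (3 - 2 * ε)) ^ (1/2 : ℝ) * D z) ^ (1/2 : ℝ)
            * (1 - t) ^ (-(1/2) : ℝ)) z₀ := by
          refine (continuousAt_const.mul (ContinuousAt.rpow_const ?_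
            (Or.inr (by norm_num)))).mul continuousAt_const
          exact continuousAt_const.mul hDc.continuousAt
        have k2 := k.tendsto
        rw [← h, mul_zero, Real.zero_rpow (by norm_num), mul_zero, zero_mul] at k2
        exact k2.mono_left nhdsWithin_le_nhds
    · apply ContinuousAt.continuousWithinAt
      have hx := hXpos z₀ hz₀ t ht.1 ht1
      have hb := base z₀ hz₀ t ht.1 ht1
      obtain ⟨h1, h2, h3, h4, h5, h6⟩ := zfacts ε hε z₀ hz₀
      have hXc : ContinuousAt (fun z => X z t) z₀ :=
        (hDc.continuousAt.mul continuousAt_const).add hc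
      refine hDc.continuousAt.mul (ContinuousAt.rpow_const ?_ (Or.inl ?_))
      · have k1 : ContinuousAt (fun z => (X z t) ^ (-(1/3) : ℝ)) z₀ :=
          hXc.rpow_const (Or.inl hx.ne')
        have k2 : ContinuousAt (fun z => (X z t) ^ (2/3 : ℝ)) z₀ :=
          hXc.rpow_const (Or.inl hx.ne')
        exact (continuousAt_const.sub ((continuousAt_const.mul hc).mul k1)).sub
          (continuousAt_const.mul k2)
      · refine (lt_of_lt_of_le ?_ hb).ne'
        positivity

/-- For every `ε ∈ (0,1)`, the function `γ` is continuous on `(0, 4π]`.  In particular, at the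
junction point `z = 4π/(3−2ε)` one has `y(z) = z^{3/2}` and the two defining formulas agree,
both giving `∫₀^{z^{3/2}} (9εz − 9εx^{2/3})^{−1/2} dx`. -/
theorem stmt_3 (ε : ℝ) (hε : ε ∈ Set.Ioo (0:ℝ) 1) :
    yFn ε (4 * π / (3 - 2 * ε)) = (4 * π / (3 - 2 * ε)) ^ (3/2 : ℝ) ∧
    ((∫ x in (0:ℝ)..(yFn ε (4 * π / (3 - 2 * ε))),
        (36 * π - 27 * (1 - ε) * (yFn ε (4 * π / (3 - 2 * ε))) ^ (2/3 : ℝ)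
          - 9 * ε * x ^ (2/3 : ℝ)) ^ (-(1/2) : ℝ)) +
      (∫ x in (yFn ε (4 * π / (3 - 2 * ε)))..((4 * π / (3 - 2 * ε)) ^ (3/2 : ℝ)),
        (36 * π - 18 * (1 - ε) * (yFn ε (4 * π / (3 - 2 * ε))) * x ^ (-(1/3) : ℝ)
          - 9 * x ^ (2/3 : ℝ)) ^ (-(1/2) : ℝ))
      = ∫ x in (0:ℝ)..((4 * π / (3 - 2 * ε)) ^ (3/2 : ℝ)),
          (9 * ε * (4 * π / (3 - 2 * ε)) - 9 * ε * x ^ (2/3 : ℝ)) ^ (-(1/2) : ℝ)) ∧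
    ContinuousOn (gammaFn ε) (Set.Ioc (0:ℝ) (4 * π)) := by
  have hε0 := hε.1
  have hε1 := hε.2
  have h32 : 0 < 3 - 2 * ε := by linarith
  have hc : 0 < 1 - ε := by linarith
  have hY : yFn ε (4 * π / (3 - 2 * ε)) = (4 * π / (3 - 2 * ε)) ^ (3/2 : ℝ) := by
    have hZ : 0 < 4 * π / (3 - 2 * ε) := by positivity
    have e : 4 * π - 4 * π / (3 - 2 * ε) = 2 * (1 - ε) * (4 * π / (3 - 2 * ε)) := by
      field_simp; ring
    unfold yFn
    rw [e]
    generalize 4 * π / (3 - 2 * ε) = Z at *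
    rw [show (3/2 : ℝ) = 1/2 + 1 by norm_num, Real.rpow_add hZ, Real.rpow_one]
    field_simp
  have hJ : ((∫ x in (0:ℝ)..(yFn ε (4 * π / (3 - 2 * ε))),
        (36 * π - 27 * (1 - ε) * (yFn ε (4 * π / (3 - 2 * ε))) ^ (2/3 : ℝ)
          - 9 * ε * x ^ (2/3 : ℝ)) ^ (-(1/2) : ℝ)) +
      (∫ x in (yFn ε (4 * π / (3 - 2 * ε)))..((4 * π / (3 - 2 * ε)) ^ (3/2 : ℝ)),
        (36 * π - 18 * (1 - ε) * (yFn ε (4 * π / (3 - 2 * ε))) * x ^ (-(1/3) : ℝ)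
          - 9 * x ^ (2/3 : ℝ)) ^ (-(1/2) : ℝ))
      = ∫ x in (0:ℝ)..((4 * π / (3 - 2 * ε)) ^ (3/2 : ℝ)),
          (9 * ε * (4 * π / (3 - 2 * ε)) - 9 * ε * x ^ (2/3 : ℝ)) ^ (-(1/2) : ℝ)) := by
    have hZ : 0 < 4 * π / (3 - 2 * ε) := by positivity
    have e : ((4 * π / (3 - 2 * ε)) ^ (3/2 : ℝ)) ^ (2/3 : ℝ) = 4 * π / (3 - 2 * ε) := by
      rw [← Real.rpow_mul hZ.le]; norm_num
    have e2 : 36 * π - 27 * (1 - ε) * (4 * π / (3 - 2 * ε)) = 9 * ε * (4 * π / (3 - 2 * ε)) := by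
      have e3 : (4 * π / (3 - 2 * ε)) * (3 - 2 * ε) = 4 * π := div_mul_cancel₀ _ h32.ne'
      linear_combination (-9) * e3
    rw [hY, intervalIntegral.integral_same, add_zero, e, e2]
  refine ⟨hY, hJ, ?_⟩
  have hZ : 0 < 4 * π / (3 - 2 * ε) := by positivity
  have hZ4 : 4 * π / (3 - 2 * ε) ≤ 4 * π := by
    rw [div_le_iff₀ h32]
    nlinarith [Real.pi_pos]
  have c1 : ContinuousOn (gammaFn ε) (Set.Ioc 0 (4 * π / (3 - 2 * ε))) := by
    refine ((F1_cont ε hε).mono fun z hz => hz.1).congr fun z hz => ?_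
    unfold gammaFn
    rw [if_pos hz.2]
  have c2 : ContinuousOn (gammaFn ε) (Set.Icc (4 * π / (3 - 2 * ε)) (4 * π)) := by
    refine ((F2a_cont ε hε).add (F2b_cont ε hε)).congr fun z hz => ?_
    rcases hz.1.eq_or_lt with h | h
    · subst h
      unfold gammaFn
      rw [if_pos le_rfl]
      exact hJ.symm
    · unfold gammaFn
      rw [if_neg (not_le.2 h)]
      rfl
  generalize 4 * π / (3 - 2 * ε) = Z at *
  rw [← Set.Ioc_union_Icc_eq_Ioc hZ hZ4]
  rintro z hz
  apply ContinuousWithinAt.union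
  · by_cases h : z ≤ Z
    · refine c1 z ⟨?_, h⟩
      rcases hz with hz | hz
      · exact hz.1
      · exact hZ.trans_le hz.1
    · apply continuousWithinAt_of_notMem_closure
      intro h'
      exact h (closure_minimal (fun _ h => h.2) isClosed_Iic h')
  · by_cases h : Z ≤ z
    · refine c2 z ⟨h, ?_⟩
      rcases hz with hz | hz
      · exact hz.2.trans hZ4
      · exact hz.2
    · apply continuousWithinAt_of_notMem_closure
      intro h'
      exact h (closure_minimal (fun _ h => h.1) isClosed_Ici h')
end

section
/- Suppose ε ∈ (0,1) satisfies condition (★). Then γ(z) < π² for all z ∈ (0, 4π). -/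
open Real MeasureTheory Set Filter

/-- Condition (★): for all `(y,z) ∈ ℝ × [4π/(3−2ε), 4π)` with `2(1−ε)y = z^{1/2}(4π − z)`,
the sum of the two comparison integrals is `< π²`. -/
def CondStar (ε : ℝ) : Prop :=
  ∀ y z : ℝ, z ∈ Set.Ico (4 * π / (3 - 2 * ε)) (4 * π) →
    2 * (1 - ε) * y = z ^ (1/2 : ℝ) * (4 * π - z) →
    (∫ x in (0:ℝ)..y,
        (36 * π - 27 * (1 - ε) * y ^ (2/3 : ℝ) - 9 * ε * x ^ (2/3 : ℝ)) ^ (-(1/2) : ℝ)) +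
    (∫ x in y..(z ^ (3/2 : ℝ)),
        (36 * π - 18 * (1 - ε) * y * x ^ (-(1/3) : ℝ) - 9 * x ^ (2/3 : ℝ)) ^ (-(1/2) : ℝ))
      < π ^ 2

lemma aux_scale (ε : ℝ) (hε : 0 < ε) (z : ℝ) (hz : 0 < z) :
    (∫ x in (0:ℝ)..(z ^ (3/2 : ℝ)), (9 * ε * z - 9 * ε * x ^ (2/3 : ℝ)) ^ (-(1/2) : ℝ)) =
    z * ∫ u in (0:ℝ)..1, (9 * ε - 9 * ε * u ^ (2/3 : ℝ)) ^ (-(1/2) : ℝ) := by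
  have h := intervalIntegral.smul_integral_comp_mul_left (a := 0) (b := 1)
    (fun x : ℝ => (9 * ε * z - 9 * ε * x ^ (2/3 : ℝ)) ^ (-(1/2) : ℝ)) (z ^ (3/2 : ℝ))
  rw [mul_zero, mul_one] at h
  rw [← h]
  have h2 : (∫ u in (0:ℝ)..1,
      (9 * ε * z - 9 * ε * (z ^ (3/2 : ℝ) * u) ^ (2/3 : ℝ)) ^ (-(1/2) : ℝ)) =
      ∫ u in (0:ℝ)..1, z ^ (-(1/2) : ℝ) * (9 * ε - 9 * ε * u ^ (2/3 : ℝ)) ^ (-(1/2) : ℝ) := by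
    apply intervalIntegral.integral_congr
    intro u hu
    rw [Set.uIcc_of_le zero_le_one] at hu
    have hu1 : u ^ (2/3 : ℝ) ≤ 1 := Real.rpow_le_one hu.1 hu.2 (by norm_num)
    have hz1 : (z ^ (3/2 : ℝ)) ^ (2/3 : ℝ) = z := by
      rw [← Real.rpow_mul hz.le]; norm_num
    simp only
    rw [Real.mul_rpow (by positivity) hu.1, hz1, ← Real.mul_rpow hz.le (by nlinarith)]
    congr 1
    ring
  rw [h2, intervalIntegral.integral_const_mul, smul_eq_mul, ← mul_assoc, ← Real.rpow_add hz]
  norm_num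

/-- If `ε ∈ (0,1)` satisfies condition (★), then `γ(z) < π²` for all `z ∈ (0, 4π)`. -/
theorem stmt_4 (ε : ℝ) (hε : ε ∈ Set.Ioo (0:ℝ) 1) (hstar : CondStar ε) :
    ∀ z ∈ Set.Ioo (0:ℝ) (4 * π), gammaFn ε z < π ^ 2 := by
  intro z hz
  obtain ⟨h0, h1⟩ := hε
  have hy : ∀ w, 2 * (1 - ε) * yFn ε w = w ^ (1/2 : ℝ) * (4 * π - w) := by
    intro w
    have : 1 - ε ≠ 0 := by linarith
    unfold yFn
    field_simp
  unfold gammaFn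
  split_ifs with hle
  · obtain ⟨w, hw⟩ : ∃ w, w = 4 * π / (3 - 2 * ε) := ⟨_, rfl⟩
    rw [← hw] at hle
    have hw0 : 0 < w := hz.1.trans_le hle
    have hpi : 4 * π = (3 - 2 * ε) * w := by
      have : 3 - 2 * ε ≠ 0 := by linarith
      rw [hw]; field_simp
    have hlt : w < 4 * π := by nlinarith
    have hww : w ^ (3/2 : ℝ) = w ^ (1/2 : ℝ) * w := by
      rw [← Real.rpow_add_one hw0.ne']; norm_num
    have hs := hstar (w ^ (3/2 : ℝ)) w ⟨hw.ge, hlt⟩ (by rw [hww, hpi]; ring)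
    have hz1 : (w ^ (3/2 : ℝ)) ^ (2/3 : ℝ) = w := by
      rw [← Real.rpow_mul hw0.le]; norm_num
    rw [intervalIntegral.integral_same, add_zero, hz1,
      show 36 * π - 27 * (1 - ε) * w = 9 * ε * w by linarith, aux_scale ε h0 w hw0] at hs
    rw [aux_scale ε h0 z hz.1]
    refine lt_of_le_of_lt (mul_le_mul_of_nonneg_right hle ?_) hs
    apply intervalIntegral.integral_nonneg zero_le_one
    intro u hu
    have hu1 : u ^ (2/3 : ℝ) ≤ 1 := Real.rpow_le_one hu.1 hu.2 (by norm_num)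
    exact Real.rpow_nonneg (by nlinarith) _
  · exact hstar _ z ⟨(not_le.mp hle).le, hz.2⟩ (hy z)
end

section
/- Let ε ∈ (0,1) satisfy condition (★). For each z ∈ (0, 4π], there exists a function f_z : (−γ(z), γ(z)) → (0, z^{3/2}] with the following properties: (i) f_z is twice continuously differentiable; (ii) for each s ∈ (−γ(z), γ(z)), f_z''(s) = min{ (36π − f_z'(s)²)/(6 f_z(s)) − (9/2) f_z(s)^{−1/3}, −3ε f_z(s)^{−1/3} }; (iii) f_z(0) = z^{3/2} and f_z'(0) = 0; (iv) lim_{s → γ(z)⁻} f_z(s) = lim_{s → −γ(z)⁺} f_z(s) = 0. -/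
open Real MeasureTheory Set Filter

lemma hasDerivAt_junction {f g : ℝ → ℝ} {a : ℝ} {S : Set ℝ} (hS : S ∈ nhds a)
    (hd : ∀ x ∈ S, x ≠ a → HasDerivAt f (g x) x) (hf : ContinuousAt f a)
    (hg : ContinuousAt g a) : HasDerivAt f (g a) a := by
  obtain ⟨δ, hδ, hb⟩ := Metric.mem_nhds_iff.1 hS
  rw [Real.ball_eq_Ioo] at hb
  have A : HasDerivWithinAt f (g a) (Ici a) a := by
    refine hasDerivWithinAt_Ici_of_tendsto_deriv (s := Ioo a (a+δ)) ?_ hf.continuousWithinAt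
      (Ioo_mem_nhdsGT (by linarith)) ?_
    · intro x hx
      exact (hd x (hb ⟨by linarith [hx.1], hx.2⟩) hx.1.ne').differentiableAt.differentiableWithinAt
    · refine (hg.tendsto.mono_left nhdsWithin_le_nhds).congr' ?_
      filter_upwards [Ioo_mem_nhdsGT (show a < a + δ by linarith)] with x hx
      exact ((hd x (hb ⟨by linarith [hx.1], hx.2⟩) hx.1.ne').deriv).symm
  have B : HasDerivWithinAt f (g a) (Iic a) a := by
    refine hasDerivWithinAt_Iic_of_tendsto_deriv (s := Ioo (a-δ) a) ?_ hf.continuousWithinAt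
      (Ioo_mem_nhdsLT (by linarith)) ?_
    · intro x hx
      exact (hd x (hb ⟨hx.1, by linarith [hx.2]⟩) hx.2.ne).differentiableAt.differentiableWithinAt
    · refine (hg.tendsto.mono_left nhdsWithin_le_nhds).congr' ?_
      filter_upwards [Ioo_mem_nhdsLT (show a - δ < a by linarith)] with x hx
      exact ((hd x (hb ⟨hx.1, by linarith [hx.2]⟩) hx.2.ne).deriv).symm
  simpa using B.union A

lemma core_int {M c : ℝ} (hM : 0 < M) (hc : 0 < c) {P g : ℝ → ℝ}
    (hP : ∀ x > 0, HasDerivAt P (2 * g x) x)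
    (hgc : ∀ x ∈ Ioc 0 M, g x ≤ -c) (hPM : P M = 0) :
    (∀ x ∈ Ioo 0 M, 0 < P x) ∧
    IntervalIntegrable (fun x => P x ^ (-(1/2) : ℝ)) volume 0 M := by
  have hlow : ∀ x ∈ Ioc 0 M, 2 * c * (M - x) ≤ P x := by
    intro x hx
    have hanti : AntitoneOn (fun x => P x + 2 * c * x) (Icc x M) := by
      have hd : ∀ t ∈ Icc x M, HasDerivAt (fun x => P x + 2 * c * x) (2 * g t + 2 * c * 1) t := by
        intro t ht
        exact (hP t (by linarith [hx.1, ht.1])).add ((hasDerivAt_id t).const_mul (2*c))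
      apply antitoneOn_of_deriv_nonpos (convex_Icc _ _)
      · exact fun t ht => (hd t ht).continuousAt.continuousWithinAt
      · intro t ht
        rw [interior_Icc] at ht
        exact (hd t (Ioo_subset_Icc_self ht)).differentiableAt.differentiableWithinAt
      · intro t ht
        rw [interior_Icc] at ht
        rw [(hd t (Ioo_subset_Icc_self ht)).deriv]
        linarith [hgc t ⟨by linarith [hx.1, ht.1], ht.2.le⟩]
    have := hanti (left_mem_Icc.2 hx.2) (right_mem_Icc.2 hx.2) hx.2
    simp only [hPM] at this
    linarith
  have hpos : ∀ x ∈ Ioo 0 M, 0 < P x := by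
    intro x hx
    have h1 := hlow x ⟨hx.1, hx.2.le⟩
    have : 0 < 2 * c * (M - x) := by
      have := sub_pos.2 hx.2
      positivity
    linarith
  refine ⟨hpos, ?_⟩
  have hI : IntervalIntegrable (fun x => (2*c) ^ (-(1/2) : ℝ) * (M - x) ^ (-(1/2) : ℝ)) volume 0 M := by
    have := (intervalIntegral.intervalIntegrable_rpow' (a := 0) (b := M) (r := (-(1/2) : ℝ)) (by norm_num)).comp_sub_left M
    simp only [sub_zero, sub_self] at this
    exact this.symm.const_mul _
  rw [intervalIntegrable_iff_integrableOn_Ioo_of_le hM.le] at hI ⊢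
  refine Integrable.mono' hI ?_ ?_
  · refine ContinuousOn.aestronglyMeasurable ?_ measurableSet_Ioo
    intro x hx
    exact ((hP x hx.1).continuousAt.rpow_const (Or.inl (hpos x hx).ne')).continuousWithinAt
  · refine (ae_restrict_iff' measurableSet_Ioo).2 (Eventually.of_forall fun x hx => ?_)
    rw [Real.norm_of_nonneg (rpow_nonneg (hpos x hx).le _),
      ← Real.mul_rpow (by positivity) (sub_pos.2 hx.2).le]
    exact Real.rpow_le_rpow_of_nonpos (mul_pos (by positivity) (sub_pos.2 hx.2))
      (hlow x ⟨hx.1, hx.2.le⟩) (by norm_num)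

lemma core_iso {M : ℝ} (hM : 0 < M) {h : ℝ → ℝ} (hpos : ∀ x ∈ Ioo 0 M, 0 < h x)
    (hint : IntervalIntegrable h volume 0 M) (hcont : ∀ x ∈ Ioo 0 M, ContinuousAt h x) :
    ∃ e : ℝ ≃o ℝ, e 0 = 0 ∧ e M = (∫ x in (0:ℝ)..M, h x) ∧
      ∀ x ∈ Ioo 0 M, HasDerivAt e (h x) x := by
  set k : ℝ → ℝ := (Ioo 0 M).indicator (fun x => h x - 1) with hk
  have kint : Integrable k := by
    rw [hk, integrable_indicator_iff measurableSet_Ioo]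
    rw [← intervalIntegrable_iff_integrableOn_Ioo_of_le hM.le]
    exact hint.sub intervalIntegrable_const
  have kin : ∀ x ∈ Ioo 0 M, 1 + k x = h x := by
    intro x hx
    simp [hk, indicator_of_mem hx]
  have kpos : ∀ x, 0 < 1 + k x := by
    intro x
    by_cases hx : x ∈ Ioo 0 M
    · rw [kin x hx]; exact hpos x hx
    · simp [hk, indicator_of_notMem hx]
  have kii : ∀ a b, IntervalIntegrable (fun x => 1 + k x) volume a b := fun a b =>
    intervalIntegrable_const.add kint.intervalIntegrable
  set F : ℝ → ℝ := fun x => ∫ t in (0:ℝ)..x, (1 + k t) with hF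
  have Fcont : Continuous F := intervalIntegral.continuous_primitive kii 0
  have Fmono : StrictMono F := by
    intro a b hab
    have h1 : F b - F a = ∫ t in a..b, (1 + k t) :=
      intervalIntegral.integral_interval_sub_left (kii _ _) (kii _ _)
    have h2 := intervalIntegral.intervalIntegral_pos_of_pos (kii a b) kpos hab
    linarith
  have Fbd : ∀ x, |F x - x| ≤ ∫ t, ‖k t‖ := by
    intro x
    have : F x - x = ∫ t in (0:ℝ)..x, k t := by
      simp only [hF]
      rw [intervalIntegral.integral_add intervalIntegrable_const kint.intervalIntegrable]
      simp
    rw [this, ← Real.norm_eq_abs]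
    exact intervalIntegral.norm_integral_le_integral_norm_uIoc.trans
      (setIntegral_le_integral kint.norm (Eventually.of_forall fun _ => norm_nonneg _))
  have Fsurj : Function.Surjective F := by
    apply Fcont.surjective
    · refine tendsto_atTop_mono (f := fun x => x - ∫ t, ‖k t‖) (fun x => ?_)
        (tendsto_atTop_add_const_right _ _ tendsto_id)
      linarith [(abs_le.1 (Fbd x)).1]
    · refine tendsto_atBot_mono (g := F) (f := fun x => x + ∫ t, ‖k t‖) (fun x => ?_)
        (tendsto_atBot_add_const_right _ _ tendsto_id)
      linarith [(abs_le.1 (Fbd x)).2]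
  refine ⟨Fmono.orderIsoOfSurjective F Fsurj, ?_, ?_, ?_⟩
  · simp [hF]
  · simp only [StrictMono.coe_orderIsoOfSurjective, hF]
    rw [intervalIntegral.integral_of_le hM.le, intervalIntegral.integral_of_le hM.le,
      integral_Ioc_eq_integral_Ioo, integral_Ioc_eq_integral_Ioo]
    exact setIntegral_congr_fun measurableSet_Ioo kin
  · intro x hx
    rw [StrictMono.coe_orderIsoOfSurjective, ← kin x hx]
    have hev : (fun t => 1 + k t) =ᶠ[nhds x] h := by
      filter_upwards [isOpen_Ioo.mem_nhds hx] with t ht using kin t ht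
    refine intervalIntegral.integral_hasDerivAt_right (kii _ _) ?_ ((hcont x hx).congr hev.symm)
    exact (aestronglyMeasurable_const.add kint.aestronglyMeasurable).stronglyMeasurableAtFilter

lemma core {M c : ℝ} (hM : 0 < M) (hc : 0 < c) {P g : ℝ → ℝ}
    (hP : ∀ x > 0, HasDerivAt P (2 * g x) x) (hg : ∀ x > 0, ContinuousAt g x)
    (hgc : ∀ x ∈ Ioc 0 M, g x ≤ -c) (hPM : P M = 0) (γ : ℝ)
    (hγ : γ = ∫ x in (0:ℝ)..M, P x ^ (-(1/2) : ℝ)) :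
    ∃ f f' : ℝ → ℝ,
      (∀ s ∈ Ioo (-γ) γ, f s ∈ Ioc 0 M) ∧
      (∀ s ∈ Ioo (-γ) γ, HasDerivAt f (f' s) s) ∧
      (∀ s ∈ Ioo (-γ) γ, HasDerivAt f' (g (f s)) s) ∧
      ContinuousOn (fun s => g (f s)) (Ioo (-γ) γ) ∧
      (∀ s ∈ Ioo (-γ) γ, f' s ^ 2 = P (f s)) ∧
      f 0 = M ∧ f' 0 = 0 ∧
      Tendsto f (nhdsWithin γ (Ioo (-γ) γ)) (nhds 0) ∧
      Tendsto f (nhdsWithin (-γ) (Ioo (-γ) γ)) (nhds 0) := by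
  obtain ⟨hpos, hint⟩ := core_int hM hc hP hgc hPM
  obtain ⟨e, e0, eM, ed⟩ := core_iso hM (h := fun x => P x ^ (-(1/2) : ℝ))
    (fun x hx => rpow_pos_of_pos (hpos x hx) _) hint
    (fun x hx => (hP x hx.1).continuousAt.rpow_const (Or.inl (hpos x hx).ne'))
  rw [← hγ] at eM
  have s0 : e.symm 0 = 0 := by rw [OrderIso.symm_apply_eq, e0]
  have sM : e.symm γ = M := by rw [OrderIso.symm_apply_eq, eM]
  have γpos : 0 < γ := by rw [← eM, ← e0]; exact e.strictMono hM
  set f : ℝ → ℝ := fun s => e.symm (γ - |s|) with hf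
  have fcont : Continuous f := e.symm.continuous.comp (by fun_prop)
  have f0 : f 0 = M := by simp [hf, sM]
  have fmem : ∀ s ∈ Ioo (-γ) γ, f s ∈ Ioc 0 M := by
    intro s hs
    have := abs_lt.2 hs
    refine ⟨?_, ?_⟩
    · rw [← s0]; exact e.symm.strictMono (by linarith)
    · rw [← sM]; exact e.symm.monotone (by linarith [abs_nonneg s])
  have fmem' : ∀ s ∈ Ioo (-γ) γ, s ≠ 0 → f s ∈ Ioo 0 M := by
    intro s hs h0
    refine ⟨(fmem s hs).1, ?_⟩
    rw [← sM]; exact e.symm.strictMono (by linarith [abs_pos.2 h0])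
  have Pnn : ∀ s ∈ Ioo (-γ) γ, 0 ≤ P (f s) := by
    intro s hs
    by_cases h0 : s = 0
    · rw [h0, f0, hPM]
    · exact (hpos _ (fmem' s hs h0)).le
  have esd : ∀ t ∈ Ioo 0 γ, HasDerivAt e.symm (√(P (e.symm t))) t := by
    intro t ht
    have hm : e.symm t ∈ Ioo 0 M := by
      refine ⟨?_, ?_⟩
      · rw [← s0]; exact e.symm.strictMono ht.1
      · rw [← sM]; exact e.symm.strictMono ht.2
    have := HasDerivAt.of_local_left_inverse (g := e.symm) (a := t)
      e.symm.continuous.continuousAt (ed _ hm) (rpow_pos_of_pos (hpos _ hm) _).ne'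
      (Eventually.of_forall fun y => e.apply_symm_apply y)
    rwa [Real.rpow_neg (hpos _ hm).le, inv_inv, ← Real.sqrt_eq_rpow] at this
  set f' : ℝ → ℝ := fun s => if s ≤ 0 then √(P (f s)) else -√(P (f s)) with hf'
  have fd : ∀ s ∈ Ioo (-γ) γ, s ≠ 0 → HasDerivAt f (f' s) s := by
    intro s hs h0
    have habs := abs_lt.2 hs
    have ht : γ - |s| ∈ Ioo 0 γ := ⟨by linarith, by linarith [abs_pos.2 h0]⟩
    have h1 := esd _ ht
    rcases lt_or_gt_of_ne h0 with h | h
    · have h2 := h1.comp s ((hasDerivAt_abs_neg h).const_sub γ)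
      exact h2.congr_deriv (by simp [hf', h.le, hf])
    · have h2 := h1.comp s ((hasDerivAt_abs_pos h).const_sub γ)
      exact h2.congr_deriv (by simp [hf', h.not_ge, hf])
  have Pfc : ∀ s ∈ Ioo (-γ) γ, ContinuousAt (fun s => P (f s)) s := fun s hs =>
    ContinuousAt.comp (hP _ (fmem s hs).1).continuousAt fcont.continuousAt
  have gfc : ∀ s ∈ Ioo (-γ) γ, ContinuousAt (fun s => g (f s)) s := fun s hs =>
    ContinuousAt.comp (hg _ (fmem s hs).1) fcont.continuousAt
  have z0 : (0:ℝ) ∈ Ioo (-γ) γ := ⟨by linarith, γpos⟩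
  have hnb : Ioo (-γ) γ ∈ nhds (0:ℝ) := isOpen_Ioo.mem_nhds z0
  have f'0 : f' 0 = 0 := by simp [hf', f0, hPM]
  have f'c : ContinuousAt f' 0 := by
    have h1 : Tendsto (fun s => √(P (f s))) (nhds 0) (nhds 0) := by
      have := (Pfc 0 z0).sqrt.tendsto
      simpa [f0, hPM] using this
    unfold ContinuousAt
    rw [f'0]
    refine squeeze_zero_norm (fun s => ?_) h1
    simp only [hf']
    split_ifs <;> simp [abs_of_nonneg (Real.sqrt_nonneg _)]
  have fd' : ∀ s ∈ Ioo (-γ) γ, HasDerivAt f (f' s) s := by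
    intro s hs
    by_cases h0 : s = 0
    · rw [h0]; exact hasDerivAt_junction hnb fd fcont.continuousAt f'c
    · exact fd s hs h0
  have fdd : ∀ s ∈ Ioo (-γ) γ, s ≠ 0 → HasDerivAt f' (g (f s)) s := by
    intro s hs h0
    have hp := hpos _ (fmem' s hs h0)
    have hsq := Real.sqrt_pos.2 hp
    have h1 : HasDerivAt (fun s => √(P (f s))) (2 * g (f s) * f' s / (2 * √(P (f s)))) s :=
      ((hP _ (fmem s hs).1).comp s (fd s hs h0)).sqrt hp.ne'
    rcases lt_or_gt_of_ne h0 with h | h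
    · have he : f' =ᶠ[nhds s] fun s => √(P (f s)) := by
        filter_upwards [Iio_mem_nhds h] with t ht
        simp [hf', (le_of_lt ht : t ≤ 0)]
      have h2 := h1.congr_of_eventuallyEq he
      refine h2.congr_deriv ?_
      rw [he.eq_of_nhds]
      field_simp
    · have he : f' =ᶠ[nhds s] fun s => -√(P (f s)) := by
        filter_upwards [Ioi_mem_nhds h] with t ht
        simp [hf', not_le.2 (show (0:ℝ) < t from ht)]
      have h2 := h1.neg.congr_of_eventuallyEq he
      refine h2.congr_deriv ?_
      rw [he.eq_of_nhds]
      field_simp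
  refine ⟨f, f', fmem, fd', ?_, ?_, ?_, f0, f'0, ?_, ?_⟩
  · intro s hs
    by_cases h0 : s = 0
    · rw [h0]; exact hasDerivAt_junction (g := fun s => g (f s)) hnb fdd f'c (gfc 0 z0)
    · exact fdd s hs h0
  · exact fun s hs => (gfc s hs).continuousWithinAt
  · intro s hs
    simp only [hf']
    split_ifs <;> simp [Real.sq_sqrt (Pnn s hs)]
  · have : f γ = 0 := by simp [hf, abs_of_pos γpos, s0]
    rw [← this]
    exact fcont.continuousAt.tendsto.mono_left nhdsWithin_le_nhds
  · have : f (-γ) = 0 := by simp [hf, abs_of_pos γpos, s0]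
    rw [← this]
    exact fcont.continuousAt.tendsto.mono_left nhdsWithin_le_nhds

lemma cube_pows {r : ℝ} (hr : 0 < r) : (r ^ 3) ^ (2/3 : ℝ) = r ^ 2 ∧
    (r ^ 3) ^ (-(1/3) : ℝ) = r⁻¹ ∧ (r ^ 3) ^ (-(4/3) : ℝ) = (r ^ 4)⁻¹ := by
  have h3 : r ^ 3 = r ^ (3:ℝ) := by norm_cast
  refine ⟨?_, ?_, ?_⟩ <;> rw [h3, ← Real.rpow_mul hr.le] <;> norm_num
  · rw [Real.rpow_neg_one]

lemma exists_cube {x : ℝ} (hx : 0 < x) : ∃ r : ℝ, 0 < r ∧ x = r ^ 3 := by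
  refine ⟨x ^ (1/3 : ℝ), rpow_pos_of_pos hx _, ?_⟩
  rw [← Real.rpow_natCast, ← Real.rpow_mul hx.le]; norm_num

lemma deriv23 {x : ℝ} (hx : 0 < x) :
    HasDerivAt (fun x : ℝ => x ^ (2/3 : ℝ)) ((2/3) * x ^ (-(1/3) : ℝ)) x := by
  have := Real.hasDerivAt_rpow_const (x := x) (p := 2/3) (Or.inl hx.ne')
  exact this.congr_deriv (by norm_num)

lemma deriv13 {x : ℝ} (hx : 0 < x) :
    HasDerivAt (fun x : ℝ => x ^ (-(1/3) : ℝ)) (-(1/3) * x ^ (-(4/3) : ℝ)) x := by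
  have := Real.hasDerivAt_rpow_const (x := x) (p := -(1/3)) (Or.inl hx.ne')
  exact this.congr_deriv (by norm_num)

lemma case_one {ε z q : ℝ} (hε0 : 0 < ε) (hε1 : ε < 1) (hq : 0 < q) (hzq : z = q ^ 2)
    (hz : z ≤ 4 * π / (3 - 2 * ε)) {γ : ℝ}
    (hγ : γ = ∫ x in (0:ℝ)..(q ^ 3), (9 * ε * z - 9 * ε * x ^ (2/3 : ℝ)) ^ (-(1/2) : ℝ)) :
    ∃ P g : ℝ → ℝ, (∀ x > 0, HasDerivAt P (2 * g x) x) ∧ (∀ x > 0, ContinuousAt g x) ∧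
      (∀ x > 0, g x ≤ -(3 * ε * x ^ (-(1/3) : ℝ))) ∧ P (q ^ 3) = 0 ∧
      γ = (∫ x in (0:ℝ)..(q ^ 3), P x ^ (-(1/2) : ℝ)) ∧
      ∀ x ∈ Ioc 0 (q ^ 3), g x = min ((36 * π - P x) / (6 * x) - (9/2) * x ^ (-(1/3) : ℝ))
        (-3 * ε * x ^ (-(1/3) : ℝ)) := by
  refine ⟨fun x => 9 * ε * z - 9 * ε * x ^ (2/3 : ℝ), fun x => -3 * ε * x ^ (-(1/3) : ℝ),
    ?_, ?_, ?_, ?_, hγ, ?_⟩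
  · intro x hx
    exact (((deriv23 hx).const_mul (9 * ε)).const_sub (9 * ε * z)).congr_deriv (by ring)
  · intro x hx
    exact continuousAt_const.mul (deriv13 hx).continuousAt
  · intro x hx
    simp
  · simp only [(cube_pows hq).1, hzq]; ring
  · intro x hx
    obtain ⟨r, hr, rfl⟩ := exists_cube hx.1
    have hrq : r ≤ q := le_of_pow_le_pow_left₀ (by norm_num) hq.le hx.2
    simp only [(cube_pows hr).1, (cube_pows hr).2.1]
    rw [min_eq_right]
    rw [le_div_iff₀ (by linarith)] at hz
    have h2 : r ^ 2 ≤ z := by rw [hzq]; exact pow_le_pow_left₀ hr.le hrq 2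
    have h3 : 0 ≤ (1 - ε) * (z - r ^ 2) := mul_nonneg (by linarith) (by linarith)
    have key : (36 * π - (9 * ε * z - 9 * ε * r ^ 2)) / (6 * r ^ 3) - 9 / 2 * r⁻¹ - -3 * ε * r⁻¹
      = (36 * π - 9 * ε * z - 27 * (1 - ε) * r ^ 2) / (6 * r ^ 3) := by
      field_simp
      ring
    have : 0 ≤ (36 * π - 9 * ε * z - 27 * (1 - ε) * r ^ 2) / (6 * r ^ 3) := by
      apply div_nonneg _ (by positivity)
      nlinarith
    linarith

lemma case_two {ε z q y : ℝ} (hε0 : 0 < ε) (hε1 : ε < 1) (hq : 0 < q) (hzq : z = q ^ 2)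
    (hz : 4 * π / (3 - 2 * ε) < z) (hz4 : z ≤ 4 * π) (hy : y = q * (4 * π - z) / (2 * (1 - ε)))
    {γ : ℝ}
    (hγ : γ = (∫ x in (0:ℝ)..y,
        (36 * π - 27 * (1 - ε) * y ^ (2/3 : ℝ) - 9 * ε * x ^ (2/3 : ℝ)) ^ (-(1/2) : ℝ)) +
    (∫ x in y..(q ^ 3),
        (36 * π - 18 * (1 - ε) * y * x ^ (-(1/3) : ℝ) - 9 * x ^ (2/3 : ℝ)) ^ (-(1/2) : ℝ))) :
    ∃ P g : ℝ → ℝ, (∀ x > 0, HasDerivAt P (2 * g x) x) ∧ (∀ x > 0, ContinuousAt g x) ∧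
      (∀ x > 0, g x ≤ -(3 * ε * x ^ (-(1/3) : ℝ))) ∧ P (q ^ 3) = 0 ∧
      γ = (∫ x in (0:ℝ)..(q ^ 3), P x ^ (-(1/2) : ℝ)) ∧
      ∀ x ∈ Ioc 0 (q ^ 3), g x = min ((36 * π - P x) / (6 * x) - (9/2) * x ^ (-(1/3) : ℝ))
        (-3 * ε * x ^ (-(1/3) : ℝ)) := by
  have hε1' : 0 < 1 - ε := by linarith
  have hy' : 2 * (1 - ε) * y = q * (4 * π - z) := by rw [hy]; field_simp
  have hy0 : 0 ≤ y := by
    rw [hy]; apply div_nonneg (mul_nonneg hq.le (by linarith)) (by linarith)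
  have hyM : y < q ^ 3 := by
    rw [div_lt_iff₀ (by linarith)] at hz
    have h1 : 4 * π - z < 2 * (1 - ε) * z := by linarith
    have h2 : 2 * (1 - ε) * y < 2 * (1 - ε) * q ^ 3 := by
      rw [hy']
      calc q * (4 * π - z) < q * (2 * (1 - ε) * z) := mul_lt_mul_of_pos_left h1 hq
        _ = _ := by rw [hzq]; ring
    exact lt_of_mul_lt_mul_left h2 (by linarith)
  set A : ℝ → ℝ := fun x => 36 * π - 27 * (1 - ε) * y ^ (2/3 : ℝ) - 9 * ε * x ^ (2/3 : ℝ) with hA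
  set B : ℝ → ℝ := fun x => 36 * π - 18 * (1 - ε) * y * x ^ (-(1/3) : ℝ) - 9 * x ^ (2/3 : ℝ) with hB
  have hAB : A y = B y := by
    rcases hy0.eq_or_lt with h | h
    · simp only [hA, hB, ← h]
      rw [Real.zero_rpow (by norm_num)]; ring
    · obtain ⟨r, hr, hyr⟩ := exists_cube h
      simp only [hA, hB, hyr, (cube_pows hr).1, (cube_pows hr).2.1]
      field_simp
      ring
  have dA : ∀ x > 0, HasDerivAt A (2 * (-3 * ε * x ^ (-(1/3) : ℝ))) x := fun x hx =>
    (((deriv23 hx).const_mul (9 * ε)).const_sub _).congr_deriv (by ring)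
  have dB : ∀ x > 0, HasDerivAt B
      (2 * (3 * (1 - ε) * y * x ^ (-(4/3) : ℝ) - 3 * x ^ (-(1/3) : ℝ))) x := fun x hx =>
    ((((deriv13 hx).const_mul (18 * (1 - ε) * y)).const_sub _).sub
      ((deriv23 hx).const_mul 9)).congr_deriv (by ring)
  set P : ℝ → ℝ := fun x => A (min x y) + B (max x y) - B y with hPdef
  set g : ℝ → ℝ := fun x => -3 * ε * x ^ (-(1/3) : ℝ)
    - 3 * (1 - ε) * x ^ (-(4/3) : ℝ) * max 0 (x - y) with hgdef
  have PA : ∀ x ≤ y, P x = A x := by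
    intro x hx; simp [hPdef, min_eq_left hx, max_eq_right hx]
  have PB : ∀ x, y ≤ x → P x = B x := by
    intro x hx; simp [hPdef, min_eq_right hx, max_eq_left hx, hAB]
  have gA : ∀ x ≤ y, g x = -3 * ε * x ^ (-(1/3) : ℝ) := by
    intro x hx; simp [hgdef, max_eq_left (sub_nonpos.2 hx)]
  have gB : ∀ x, 0 < x → y ≤ x →
      g x = 3 * (1 - ε) * y * x ^ (-(4/3) : ℝ) - 3 * x ^ (-(1/3) : ℝ) := by
    intro x hx0 hx
    simp only [hgdef, max_eq_right (sub_nonneg.2 hx)]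
    obtain ⟨r, hr, rfl⟩ := exists_cube hx0
    simp only [(cube_pows hr).2.2, (cube_pows hr).2.1]
    field_simp
    ring
  have gc : ∀ x > 0, ContinuousAt g x := by
    intro x hx
    have h1 := (deriv13 hx).continuousAt
    have h2 : ContinuousAt (fun x : ℝ => x ^ (-(4/3) : ℝ)) x :=
      Real.continuousAt_rpow_const _ _ (Or.inl hx.ne')
    have h3 : ContinuousAt (fun x : ℝ => max 0 (x - y)) x := by fun_prop
    exact (continuousAt_const.mul h1).sub ((continuousAt_const.mul h2).mul h3)
  have Pd : ∀ x > 0, x ≠ y → HasDerivAt P (2 * g x) x := by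
    intro x hx hxy
    rcases lt_or_gt_of_ne hxy with h | h
    · rw [gA x h.le]
      refine (dA x hx).congr_of_eventuallyEq ?_
      filter_upwards [Iio_mem_nhds h] with t ht using PA t (le_of_lt ht)
    · rw [gB x hx h.le]
      refine (dB x hx).congr_of_eventuallyEq ?_
      filter_upwards [Ioi_mem_nhds h] with t ht using PB t (le_of_lt ht)
  have Pd' : ∀ x > 0, HasDerivAt P (2 * g x) x := by
    intro x hx
    by_cases hxy : x = y
    · have hyp : 0 < y := hxy ▸ hx
      rw [hxy]
      refine hasDerivAt_junction (g := fun x => 2 * g x) (Ioi_mem_nhds hyp) (fun t ht => Pd t ht)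
        ?_ (continuousAt_const.mul (gc y hyp))
      have h1 : ContinuousAt (fun x => A (min x y)) y :=
        ContinuousAt.comp (g := A) (by simpa using (dA y hyp).continuousAt) (by fun_prop)
      have h2 : ContinuousAt (fun x => B (max x y)) y :=
        ContinuousAt.comp (g := B) (by simpa using (dB y hyp).continuousAt) (by fun_prop)
      exact (h1.add h2).sub continuousAt_const
    · exact Pd x hx hxy
  have gle : ∀ x > 0, g x ≤ -(3 * ε * x ^ (-(1/3) : ℝ)) := by
    intro x hx
    have : 0 ≤ 3 * (1 - ε) * x ^ (-(4/3) : ℝ) * max 0 (x - y) := by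
      have := rpow_pos_of_pos hx (-(4/3))
      have h2 := le_max_left 0 (x - y)
      positivity
    simp only [hgdef]; linarith
  have PM : P (q ^ 3) = 0 := by
    rw [PB _ hyM.le]
    simp only [hB, (cube_pows hq).1, (cube_pows hq).2.1]
    have : 18 * (1 - ε) * y * q⁻¹ = 9 * (4 * π - z) := by
      have : 18 * (1 - ε) * y = 9 * (q * (4 * π - z)) := by rw [← hy']; ring
      rw [this]; field_simp
    rw [this, hzq]; ring
  have hM : 0 < q ^ 3 := by positivity
  refine ⟨P, g, Pd', gc, gle, PM, ?_, ?_⟩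
  · have hint := (core_int hM (c := 3 * ε * (q ^ 3) ^ (-(1/3) : ℝ)) (by positivity) Pd' (fun x hx => by
      have h1 := gle x hx.1
      have h2 : (q ^ 3) ^ (-(1/3) : ℝ) ≤ x ^ (-(1/3) : ℝ) :=
        Real.rpow_le_rpow_of_nonpos hx.1 hx.2 (by norm_num)
      have h3 := mul_le_mul_of_nonneg_left h2 (show 0 ≤ 3 * ε by linarith)
      linarith) PM).2
    have hi1 : IntervalIntegrable (fun x => P x ^ (-(1/2) : ℝ)) volume 0 y :=
      hint.mono_set (by rw [uIcc_of_le hy0, uIcc_of_le hM.le]; exact Icc_subset_Icc le_rfl hyM.le)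
    have hi2 : IntervalIntegrable (fun x => P x ^ (-(1/2) : ℝ)) volume y (q ^ 3) :=
      hint.mono_set (by rw [uIcc_of_le hyM.le, uIcc_of_le hM.le]; exact Icc_subset_Icc hy0 le_rfl)
    rw [← intervalIntegral.integral_add_adjacent_intervals hi1 hi2, hγ]
    congr 1
    · apply intervalIntegral.integral_congr
      intro x hx
      rw [uIcc_of_le hy0] at hx
      simp only [PA x hx.2, hA]
    · apply intervalIntegral.integral_congr
      intro x hx
      rw [uIcc_of_le hyM.le] at hx
      simp only [PB x hx.1, hB]
  · intro x hx
    rcases le_total x y with h | h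
    · rw [gA x h, PA x h]
      have hyp : 0 < y := lt_of_lt_of_le hx.1 h
      obtain ⟨t, ht, hyt⟩ := exists_cube hyp
      obtain ⟨r, hr, rfl⟩ := exists_cube hx.1
      have hrt : r ≤ t := le_of_pow_le_pow_left₀ (n := 3) (by norm_num) ht.le (hyt ▸ h)
      simp only [hA, hyt, (cube_pows hr).1, (cube_pows hr).2.1, (cube_pows ht).1]
      rw [min_eq_right]
      have key : (36 * π - (36 * π - 27 * (1 - ε) * t ^ 2 - 9 * ε * r ^ 2)) / (6 * r ^ 3)
          - 9 / 2 * r⁻¹ - -3 * ε * r⁻¹ = 27 * (1 - ε) * (t ^ 2 - r ^ 2) / (6 * r ^ 3) := by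
        field_simp
        ring
      have h2 : 0 ≤ t ^ 2 - r ^ 2 := sub_nonneg.2 (pow_le_pow_left₀ hr.le hrt 2)
      have : 0 ≤ 27 * (1 - ε) * (t ^ 2 - r ^ 2) / (6 * r ^ 3) := by positivity
      linarith
    · have hle := gle x hx.1
      have hgx := gB x hx.1 h
      rw [PB x h]
      have e1 : (36 * π - B x) / (6 * x) - 9 / 2 * x ^ (-(1/3) : ℝ) = g x := by
        rw [hgx]
        obtain ⟨r, hr, rfl⟩ := exists_cube hx.1
        simp only [hB, (cube_pows hr).1, (cube_pows hr).2.1, (cube_pows hr).2.2]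
        field_simp
        ring
      rw [e1, min_eq_left]
      linarith

/-- Existence of the comparison function `f_z` on `(−γ(z), γ(z))`: twice continuously
differentiable, taking values in `(0, z^{3/2}]`, satisfying the ODE
`f'' = min{(36π − (f')²)/(6f) − (9/2) f^{−1/3}, −3ε f^{−1/3}}`,
with `f(0) = z^{3/2}`, `f'(0) = 0`, and `f → 0` at both endpoints. -/
theorem stmt_5 (ε : ℝ) (hε : ε ∈ Set.Ioo (0:ℝ) 1) (hstar : CondStar ε)
    (z : ℝ) (hz : z ∈ Set.Ioc (0:ℝ) (4 * π)) :
    ∃ f f' f'' : ℝ → ℝ,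
      (∀ s ∈ Set.Ioo (-(gammaFn ε z)) (gammaFn ε z), f s ∈ Set.Ioc (0:ℝ) (z ^ (3/2 : ℝ))) ∧
      (∀ s ∈ Set.Ioo (-(gammaFn ε z)) (gammaFn ε z), HasDerivAt f (f' s) s) ∧
      (∀ s ∈ Set.Ioo (-(gammaFn ε z)) (gammaFn ε z), HasDerivAt f' (f'' s) s) ∧
      ContinuousOn f'' (Set.Ioo (-(gammaFn ε z)) (gammaFn ε z)) ∧
      (∀ s ∈ Set.Ioo (-(gammaFn ε z)) (gammaFn ε z),
        f'' s = min ((36 * π - (f' s) ^ 2) / (6 * f s) - (9/2) * (f s) ^ (-(1/3) : ℝ))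
                    (-3 * ε * (f s) ^ (-(1/3) : ℝ))) ∧
      f 0 = z ^ (3/2 : ℝ) ∧ f' 0 = 0 ∧
      Filter.Tendsto f
        (nhdsWithin (gammaFn ε z) (Set.Ioo (-(gammaFn ε z)) (gammaFn ε z))) (nhds 0) ∧
      Filter.Tendsto f
        (nhdsWithin (-(gammaFn ε z)) (Set.Ioo (-(gammaFn ε z)) (gammaFn ε z))) (nhds 0) := by
  obtain ⟨hε0, hε1⟩ := hε
  obtain ⟨hz0, hz4⟩ := hz
  set q : ℝ := z ^ (1/2 : ℝ) with hqdef
  have hq : 0 < q := rpow_pos_of_pos hz0 _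
  have hzq : z = q ^ 2 := by
    rw [hqdef, ← Real.rpow_natCast, ← Real.rpow_mul hz0.le]; norm_num
  have hM : z ^ (3/2 : ℝ) = q ^ 3 := by
    rw [hqdef, ← Real.rpow_natCast, ← Real.rpow_mul hz0.le]; norm_num
  have hex : ∃ P g : ℝ → ℝ, (∀ x > 0, HasDerivAt P (2 * g x) x) ∧ (∀ x > 0, ContinuousAt g x) ∧
      (∀ x > 0, g x ≤ -(3 * ε * x ^ (-(1/3) : ℝ))) ∧ P (q ^ 3) = 0 ∧
      gammaFn ε z = (∫ x in (0:ℝ)..(q ^ 3), P x ^ (-(1/2) : ℝ)) ∧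
      ∀ x ∈ Ioc 0 (q ^ 3), g x = min ((36 * π - P x) / (6 * x) - (9/2) * x ^ (-(1/3) : ℝ))
        (-3 * ε * x ^ (-(1/3) : ℝ)) := by
    by_cases h : z ≤ 4 * π / (3 - 2 * ε)
    · refine case_one hε0 hε1 hq hzq h ?_
      rw [gammaFn, if_pos h, hM]
    · refine case_two (y := yFn ε z) hε0 hε1 hq hzq (not_le.1 h) hz4 rfl ?_
      rw [gammaFn, if_neg h, hM]
  obtain ⟨P, g, hP, hg, hgc, hPM, hγ, hode⟩ := hex
  have hM0 : 0 < q ^ 3 := by positivity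
  obtain ⟨f, f', h1, h2, h3, h4, h5, h6, h7, h8, h9⟩ :=
    core hM0 (c := 3 * ε * (q ^ 3) ^ (-(1/3) : ℝ)) (by positivity) hP hg (fun x hx => by
      have h1 := hgc x hx.1
      have h2 : (q ^ 3) ^ (-(1/3) : ℝ) ≤ x ^ (-(1/3) : ℝ) :=
        Real.rpow_le_rpow_of_nonpos hx.1 hx.2 (by norm_num)
      have h3 := mul_le_mul_of_nonneg_left h2 (show 0 ≤ 3 * ε by linarith)
      linarith) hPM _ hγ
  rw [hM]
  refine ⟨f, f', fun s => g (f s), h1, h2, h3, h4, ?_, h6, h7, h8, h9⟩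
  intro s hs
  rw [h5 s hs]
  exact hode _ (h1 s hs)
end

section
/- Let ε ∈ (0,1) and z ∈ (0, 4π/(3−2ε)]. Then there exists a smooth function h : (0, γ(z)) → (0, z^{3/2}) such that lim_{s→0⁺} h(s) = z^{3/2}, lim_{s→γ(z)⁻} h(s) = 0, h'(s) = −(9εz − 9ε h(s)^{2/3})^{1/2} for all s ∈ (0, γ(z)), and lim_{s→0⁺} h'(s) = 0. -/
open Real MeasureTheory Set Filter

/-- The comparison function `γ` for `z ∈ (0, 4π/(3−2ε)]`. -/
noncomputable def gammaLow (ε z : ℝ) : ℝ :=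
  ∫ x in (0:ℝ)..(z ^ (3/2 : ℝ)), (9 * ε * z - 9 * ε * x ^ (2/3 : ℝ)) ^ (-(1/2) : ℝ)


lemma aux_pow (z c : ℝ) (hz : 0 < z) (hc : 0 ≤ c) :
    (z ^ (3/2 : ℝ) * c ^ 3) ^ (2/3 : ℝ) = z * c ^ 2 := by
  rw [Real.mul_rpow (by positivity) (by positivity), ← Real.rpow_mul hz.le,
    ← Real.rpow_natCast c 3, ← Real.rpow_mul hc, ← Real.rpow_natCast c 2]
  norm_num

lemma aux_gamma (ε z : ℝ) (hε : 0 < ε) (hz : 0 < z) :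
    gammaLow ε z = z / √ε * (π / 4) := by
  have hR : 0 < z ^ (3/2 : ℝ) := by positivity
  have hsm : StrictMonoOn (fun θ : ℝ => z ^ (3/2 : ℝ) * sin θ ^ 3) (Icc 0 (π/2)) := by
    intro a ha b hb hab
    have h1 : sin a < sin b := strictMonoOn_sin ⟨by linarith [ha.1, pi_pos], ha.2⟩
      ⟨by linarith [hb.1, pi_pos], hb.2⟩ hab
    have h0 : 0 ≤ sin a := sin_nonneg_of_nonneg_of_le_pi ha.1 (by linarith [ha.2, pi_pos])
    have := pow_lt_pow_left₀ h1 h0 (n := 3) (by norm_num)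
    exact mul_lt_mul_of_pos_left this hR
  have himg : (fun θ : ℝ => z ^ (3/2 : ℝ) * sin θ ^ 3) '' (Ioo 0 (π/2)) = Ioo 0 (z ^ (3/2 : ℝ)) := by
    apply Subset.antisymm
    · rintro _ ⟨θ, hθ, rfl⟩
      have h1 := hsm ⟨le_rfl, by positivity⟩ (Ioo_subset_Icc_self hθ) hθ.1
      have h2 := hsm (Ioo_subset_Icc_self hθ) ⟨by positivity, le_rfl⟩ hθ.2
      simp only [sin_zero, sin_pi_div_two] at h1 h2
      exact ⟨by simpa using h1, by simpa using h2⟩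
    · have := intermediate_value_Ioo (f := fun θ : ℝ => z ^ (3/2 : ℝ) * sin θ ^ 3)
        (a := 0) (b := π/2) (by positivity) (by fun_prop)
      simpa using this
  unfold gammaLow
  rw [intervalIntegral.integral_of_le hR.le, integral_Ioc_eq_integral_Ioo, ← himg,
    integral_image_eq_integral_abs_deriv_smul measurableSet_Ioo
      (f' := fun θ => z ^ (3/2 : ℝ) * (3 * sin θ ^ 2 * cos θ))]
  · have : ∀ θ ∈ Ioo (0:ℝ) (π/2), |z ^ (3/2 : ℝ) * (3 * sin θ ^ 2 * cos θ)| •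
        (9 * ε * z - 9 * ε * (z ^ (3/2 : ℝ) * sin θ ^ 3) ^ (2/3 : ℝ)) ^ (-(1/2) : ℝ)
        = z / √ε * sin θ ^ 2 := by
      intro θ hθ
      have hs : 0 < sin θ := sin_pos_of_pos_of_lt_pi hθ.1 (by linarith [hθ.2, pi_pos])
      have hc : 0 < cos θ := cos_pos_of_mem_Ioo ⟨by linarith [hθ.1, pi_pos], hθ.2⟩
      rw [aux_pow z _ hz hs.le, abs_of_pos (by positivity)]
      have e1 : 9 * ε * z - 9 * ε * (z * sin θ ^ 2) = (3 * √ε * √z * cos θ) ^ 2 := by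
        rw [mul_pow, mul_pow, mul_pow, sq_sqrt hε.le, sq_sqrt hz.le, cos_sq']; ring
      have e2 : z ^ (3/2 : ℝ) = z * √z := by
        rw [sqrt_eq_rpow, show (3/2:ℝ) = 1 + 1/2 by norm_num, rpow_add hz, rpow_one]
      rw [e1, rpow_neg (by positivity), ← sqrt_eq_rpow, sqrt_sq (by positivity), e2]
      have : 0 < √ε := sqrt_pos.2 hε
      have : 0 < √z := sqrt_pos.2 hz
      simp only [smul_eq_mul]
      field_simp
    rw [setIntegral_congr_fun measurableSet_Ioo this, integral_const_mul,
      ← integral_Ioc_eq_integral_Ioo, ← intervalIntegral.integral_of_le (by positivity),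
      integral_sin_sq]
    simp
    ring_nf
    simp
  · intro θ _
    have := (((hasDerivAt_sin θ).pow 3).const_mul (z ^ (3/2 : ℝ))).hasDerivWithinAt (s := Ioo 0 (π/2))
    refine this.congr_deriv ?_
    norm_num
  · exact (hsm.mono Ioo_subset_Icc_self).injOn

lemma aux_strict : StrictMono (fun x : ℝ => x / 2 + sin (2 * x) / 4) := by
  intro a b hab
  have h1 : sin (2*b) - sin (2*a) = 2 * sin (b - a) * cos (b + a) := by
    rw [sin_sub_sin]; ring_nf
  have h2 : |sin (b-a)| < b - a := by
    have := abs_sin_lt_abs (x := b - a) (by linarith)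
    rwa [abs_of_pos (sub_pos.2 hab)] at this
  have h3 : |sin (b-a) * cos (b+a)| ≤ |sin (b-a)| := by
    rw [abs_mul]; exact mul_le_of_le_one_right (abs_nonneg _) (abs_cos_le_one _)
  have := neg_abs_le (sin (b-a) * cos (b+a))
  show a / 2 + sin (2 * a) / 4 < b / 2 + sin (2 * b) / 4
  nlinarith

/-- For `ε ∈ (0,1)` and `z ∈ (0, 4π/(3−2ε)]`, there is a smooth function
`h : (0, γ(z)) → (0, z^{3/2})` with `h → z^{3/2}` at `0`, `h → 0` at `γ(z)`,
`h'(s) = −(9εz − 9ε h(s)^{2/3})^{1/2}` on `(0, γ(z))`, and `h' → 0` at `0`. -/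
theorem stmt_6 (ε z : ℝ) (hε : ε ∈ Set.Ioo (0:ℝ) 1)
    (hz : z ∈ Set.Ioc (0:ℝ) (4 * π / (3 - 2 * ε))) :
    ∃ h : ℝ → ℝ,
      (∀ s ∈ Set.Ioo (0:ℝ) (gammaLow ε z), h s ∈ Set.Ioo (0:ℝ) (z ^ (3/2 : ℝ))) ∧
      ContDiffOn ℝ (⊤ : ℕ∞) h (Set.Ioo (0:ℝ) (gammaLow ε z)) ∧
      (∀ s ∈ Set.Ioo (0:ℝ) (gammaLow ε z),
        HasDerivAt h (-Real.sqrt (9 * ε * z - 9 * ε * (h s) ^ (2/3 : ℝ))) s) ∧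
      Filter.Tendsto h (nhdsWithin 0 (Set.Ioo (0:ℝ) (gammaLow ε z)))
        (nhds (z ^ (3/2 : ℝ))) ∧
      Filter.Tendsto h (nhdsWithin (gammaLow ε z) (Set.Ioo (0:ℝ) (gammaLow ε z)))
        (nhds 0) ∧
      Filter.Tendsto (deriv h) (nhdsWithin 0 (Set.Ioo (0:ℝ) (gammaLow ε z))) (nhds 0) := by
  obtain ⟨hε, -⟩ := hε
  obtain ⟨hz, -⟩ := hz
  rw [aux_gamma ε z hε hz]
  have hse : 0 < √ε := sqrt_pos.2 hε
  have hsz : 0 < √z := sqrt_pos.2 hz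
  have hk : 0 < z / √ε := by positivity
  set k := z / √ε with hkdef
  let G : ℝ → ℝ := fun x => k * (x / 2 + sin (2 * x) / 4)
  have hGm : StrictMono G := aux_strict.const_mul hk
  have hGc : Continuous G := by fun_prop
  have hGs : Function.Surjective G := by
    have hb : ∀ x : ℝ, -1 ≤ sin (2*x) ∧ sin (2*x) ≤ 1 := fun x => ⟨neg_one_le_sin _, sin_le_one _⟩
    apply hGc.surjective
    · refine Tendsto.const_mul_atTop hk ?_
      refine tendsto_atTop_mono (f := fun x : ℝ => x / 2 + (-1/4)) (fun x => by linarith [(hb x).1]) ?_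
      exact tendsto_atTop_add_const_right _ _ (tendsto_id.atTop_div_const (by norm_num))
    · refine Tendsto.const_mul_atBot hk ?_
      refine tendsto_atBot_mono (f := fun x : ℝ => x / 2 + 1/4) (fun x => by linarith [(hb x).2]) ?_
      exact tendsto_atBot_add_const_right _ _ (tendsto_id.atBot_div_const (by norm_num))
  let e : ℝ ≃ₜ ℝ := (hGm.orderIsoOfSurjective G hGs).toHomeomorph
  have heG : ∀ x, e x = G x := fun x => rfl
  have hG0 : G 0 = 0 := by simp [G]
  have hG1 : G (π/2) = k * (π/4) := by
    simp only [G]; rw [show 2 * (π/2) = π by ring, sin_pi]; ring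
  have he0 : e.symm 0 = 0 := by rw [Homeomorph.symm_apply_eq, heG, hG0]
  have he1 : e.symm (k * (π/4)) = π/2 := by rw [Homeomorph.symm_apply_eq, heG, hG1]
  have hmem : ∀ s ∈ Ioo (0:ℝ) (k * (π/4)), e.symm s ∈ Ioo 0 (π/2) := by
    intro s hs
    have h1 : G (e.symm s) = s := by rw [← heG]; simp
    constructor
    · rw [← hGm.lt_iff_lt, hG0, h1]; exact hs.1
    · rw [← hGm.lt_iff_lt, hG1, h1]; exact hs.2
  have hGd : ∀ x, HasDerivAt G (k * cos x ^ 2) x := by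
    intro x
    have h1 : HasDerivAt (fun x : ℝ => 2 * x) 2 x := by simpa using (hasDerivAt_id x).const_mul 2
    have := (((hasDerivAt_id x).div_const 2).add (h1.sin.div_const 4)).const_mul k
    refine this.congr_deriv ?_
    rw [cos_sq]; ring
  have hcos : ∀ s ∈ Ioo (0:ℝ) (k * (π/4)), 0 < cos (e.symm s) := fun s hs =>
    cos_pos_of_mem_Ioo ⟨by linarith [(hmem s hs).1, pi_pos], (hmem s hs).2⟩
  have hsin : ∀ s ∈ Ioo (0:ℝ) (k * (π/4)), 0 < sin (e.symm s) := fun s hs =>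
    sin_pos_of_pos_of_lt_pi (hmem s hs).1 (by linarith [(hmem s hs).2, pi_pos])
  have hed : ∀ s ∈ Ioo (0:ℝ) (k * (π/4)), HasDerivAt e.symm (k * cos (e.symm s) ^ 2)⁻¹ s := by
    intro s hs
    have := hcos s hs
    exact HasDerivAt.of_local_left_inverse e.symm.continuous.continuousAt (hGd (e.symm s))
      (by positivity) (Eventually.of_forall fun y => by rw [← heG]; simp)
  have hR : 0 < z ^ (3/2 : ℝ) := by positivity
  have e2 : z ^ (3/2 : ℝ) = z * √z := by
    rw [sqrt_eq_rpow, show (3/2:ℝ) = 1 + 1/2 by norm_num, rpow_add hz, rpow_one]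
  have hder : ∀ s ∈ Ioo (0:ℝ) (k * (π/4)), HasDerivAt (fun s => z ^ (3/2 : ℝ) * cos (e.symm s) ^ 3)
      (-(3 * √ε * √z * sin (e.symm s))) s := by
    intro s hs
    have hc := hcos s hs
    have := ((hed s hs).cos.pow 3).const_mul (z ^ (3/2 : ℝ))
    refine this.congr_deriv ?_
    rw [e2, hkdef]
    norm_num
    field_simp
  have hec : Continuous e.symm := e.symm.continuous
  refine ⟨fun s => z ^ (3/2 : ℝ) * cos (e.symm s) ^ 3, ?_, ?_, ?_, ?_, ?_, ?_⟩
  · intro s hs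
    have hc := hcos s hs
    have hs' := hsin s hs
    have hc1 : cos (e.symm s) < 1 := by nlinarith [sin_sq_add_cos_sq (e.symm s)]
    exact ⟨by positivity, mul_lt_of_lt_one_right hR (pow_lt_one₀ hc.le hc1 (by norm_num))⟩
  · intro s hs
    have hc := hcos s hs
    have : ContDiffAt ℝ (⊤ : ℕ∞) e.symm s :=
      e.toOpenPartialHomeomorph.contDiffAt_symm_deriv (f₀' := k * cos (e.symm s) ^ 2) (by positivity)
        (by simp) (hGd (e.symm s)) (by
          show ContDiffAt ℝ (⊤ : ℕ∞) G _
          simp only [G]; fun_prop)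
    exact (contDiffAt_const.mul (this.cos.pow 3)).contDiffWithinAt
  · intro s hs
    have hc := hcos s hs
    have hs' := hsin s hs
    have := hder s hs
    refine this.congr_deriv ?_
    simp only
    rw [aux_pow z _ hz hc.le]
    have e1 : 9 * ε * z - 9 * ε * (z * cos (e.symm s) ^ 2) = (3 * √ε * √z * sin (e.symm s)) ^ 2 := by
      rw [mul_pow, mul_pow, mul_pow, sq_sqrt hε.le, sq_sqrt hz.le, sin_sq]; ring
    rw [e1, sqrt_sq (by positivity)]
  · have : Continuous (fun s => z ^ (3/2 : ℝ) * cos (e.symm s) ^ 3) := by fun_prop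
    have := this.tendsto 0
    simp only [he0, cos_zero, one_pow, mul_one] at this
    exact this.mono_left nhdsWithin_le_nhds
  · have : Continuous (fun s => z ^ (3/2 : ℝ) * cos (e.symm s) ^ 3) := by fun_prop
    have := this.tendsto (k * (π/4))
    simp only [he1, cos_pi_div_two] at this
    norm_num at this
    exact this.mono_left nhdsWithin_le_nhds
  · have : Continuous (fun s => -(3 * √ε * √z * sin (e.symm s))) := by fun_prop
    have := this.tendsto 0
    simp only [he0, sin_zero, mul_zero, neg_zero] at this
    refine (this.mono_left nhdsWithin_le_nhds).congr' ?_
    filter_upwards [self_mem_nhdsWithin] with s hs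
    exact (hder s hs).deriv.symm
end

section
/- Let ε ∈ (0,1) and z ∈ (4π/(3−2ε), 4π]. Then there exists a continuously differentiable function h : (0, γ(z)) → (0, z^{3/2}) such that lim_{s→0⁺} h(s) = z^{3/2}, lim_{s→γ(z)⁻} h(s) = 0, lim_{s→0⁺} h'(s) = 0, and for all s ∈ (0, γ(z)): h'(s) = −(36π − 18(1−ε) y(z) h(s)^{−1/3} − 9 h(s)^{2/3})^{1/2} if h(s) ≥ y(z), and h'(s) = −(36π − 27(1−ε) y(z)^{2/3} − 9ε h(s)^{2/3})^{1/2} if h(s) ≤ y(z). Moreover h is twice continuously differentiable and satisfies h''(s) = min{ (36π − h'(s)²)/(6 h(s)) − (9/2) h(s)^{−1/3}, −3ε h(s)^{−1/3} } on (0, γ(z)). -/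
open Real MeasureTheory Set Filter

/-- The comparison function `γ` for `z ∈ (4π/(3−2ε), 4π]`. -/
noncomputable def gammaHigh (ε z : ℝ) : ℝ :=
  (∫ x in (0:ℝ)..(yFn ε z),
      (36 * π - 27 * (1 - ε) * (yFn ε z) ^ (2/3 : ℝ) - 9 * ε * x ^ (2/3 : ℝ)) ^ (-(1/2) : ℝ)) +
  (∫ x in (yFn ε z)..(z ^ (3/2 : ℝ)),
      (36 * π - 18 * (1 - ε) * (yFn ε z) * x ^ (-(1/3) : ℝ) - 9 * x ^ (2/3 : ℝ)) ^ (-(1/2) : ℝ))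


lemma core_inv (F G : ℝ → ℝ) (M c γ : ℝ) (hM : 0 < M) (hc : 0 < c) (hFm : Measurable F)
    (hF : ∀ x, 0 < x → HasDerivAt F (G x) x) (hG : ∀ x ∈ Ioc 0 M, G x ≤ -c) (hFM : F M = 0)
    (hγ : γ = ∫ x in (0:ℝ)..M, (F x) ^ (-(1/2) : ℝ)) :
    (∀ x ∈ Ioo 0 M, 0 < F x) ∧
    (∀ a ∈ Icc 0 M, ∀ b ∈ Icc 0 M, IntervalIntegrable (fun x => (F x) ^ (-(1/2) : ℝ)) volume a b) ∧
    ∃ h : ℝ → ℝ, Continuous h ∧ h 0 = M ∧ h γ = 0 ∧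
      ∀ s ∈ Ioo 0 γ, h s ∈ Ioo 0 M ∧ HasDerivAt h (-√(F (h s))) s := by
  have hlow : ∀ x ∈ Ioo 0 M, c * (M - x) ≤ F x := by
    intro x hx
    obtain ⟨t, ht, hte⟩ := exists_hasDerivAt_eq_slope F G hx.2
      (fun u hu => (hF u (hx.1.trans_le hu.1)).continuousAt.continuousWithinAt)
      (fun u hu => hF u (hx.1.trans hu.1))
    have h1 := hG t ⟨hx.1.trans ht.1, ht.2.le⟩
    rw [hte, div_le_iff₀ (by linarith [hx.2]), hFM] at h1
    linarith
  have hpos : ∀ x ∈ Ioo 0 M, 0 < F x := fun x hx =>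
    lt_of_lt_of_le (mul_pos hc (by linarith [hx.2])) (hlow x hx)
  classical
  set f : ℝ → ℝ := fun x => if x ∈ Ioo 0 M then (F x) ^ (-(1/2) : ℝ) else 1 with hf
  have fpos : ∀ x, 0 < f x := by
    intro x
    simp only [hf]
    split_ifs with hx
    · exact rpow_pos_of_pos (hpos x hx) _
    · exact one_pos
  have fmeas : Measurable f :=
    Measurable.ite measurableSet_Ioo (hFm.pow_const _) measurable_const
  have fint : ∀ a b, IntervalIntegrable f volume a b := by
    intro a b
    have h1 : IntervalIntegrable (fun x : ℝ => x ^ (-(1/2) : ℝ)) volume (M - a) (M - b) :=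
      intervalIntegral.intervalIntegrable_rpow' (by norm_num)
    have h2 : IntervalIntegrable (fun x : ℝ => (M - x) ^ (-(1/2) : ℝ)) volume a b := by
      have := h1.comp_sub_left M
      simpa using this
    have h3 := (h2.norm.const_mul (c ^ (-(1/2) : ℝ))).add
      (intervalIntegrable_const (μ := volume) (a := a) (b := b) (c := (1:ℝ)))
    refine h3.mono_fun fmeas.aestronglyMeasurable (Eventually.of_forall fun x => ?_)
    have hc' : 0 < c ^ (-(1/2) : ℝ) := rpow_pos_of_pos hc _
    simp only
    rw [Real.norm_of_nonneg (fpos x).le, Real.norm_of_nonneg (by positivity)]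
    simp only [hf]
    split_ifs with hx
    · have hMx : 0 < M - x := by linarith [hx.2]
      have := rpow_le_rpow_of_nonpos (mul_pos hc hMx) (hlow x hx) (show (-(1/2) : ℝ) ≤ 0 by norm_num)
      rw [mul_rpow hc.le hMx.le] at this
      rw [Real.norm_of_nonneg (rpow_pos_of_pos hMx _).le]
      linarith
    · have : 0 ≤ c ^ (-(1/2) : ℝ) * ‖(M - x) ^ (-(1/2) : ℝ)‖ := by positivity
      linarith
  have feq : ∀ᵐ x : ℝ, x ∈ Ioc 0 M → f x = (F x) ^ (-(1/2) : ℝ) := by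
    have : ∀ᵐ x : ℝ, x ≠ M := by simp [ae_iff]
    filter_upwards [this] with x hx hx'
    simp only [hf]
    rw [if_pos ⟨hx'.1, lt_of_le_of_ne hx'.2 hx⟩]
  set S : ℝ → ℝ := fun x => ∫ t in (0:ℝ)..x, f t with hS
  have S0 : S 0 = 0 := by simp [hS]
  have SM : S M = γ := by
    rw [hγ]
    refine intervalIntegral.integral_congr_ae ?_
    rw [uIoc_of_le hM.le]; exact feq
  have Ssub : ∀ a b, S b - S a = ∫ t in a..b, f t := fun a b =>
    intervalIntegral.integral_interval_sub_left (fint _ _) (fint _ _)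
  have Smono : StrictMono S := by
    intro a b hab
    have := intervalIntegral.intervalIntegral_pos_of_pos (fint a b) fpos hab
    rw [← Ssub] at this
    linarith
  have Scont : Continuous S := intervalIntegral.continuous_primitive fint 0
  have Stop : Tendsto S atTop atTop := by
    have : Tendsto (fun x => S M + (x - M)) atTop atTop :=
      tendsto_atTop_add_const_left _ _ (tendsto_atTop_add_const_right _ _ tendsto_id)
    refine this.congr' ?_
    filter_upwards [eventually_ge_atTop M] with x hx
    have h1 : ∫ t in M..x, f t = ∫ t in M..x, (1:ℝ) := by
      refine intervalIntegral.integral_congr fun t ht => ?_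
      rw [uIcc_of_le hx] at ht
      simp only [hf]
      rw [if_neg (fun h => not_lt_of_ge ht.1 h.2)]
    rw [← Ssub] at h1
    simp at h1
    linarith
  have Sbot : Tendsto S atBot atBot := by
    refine (tendsto_id).congr' ?_
    filter_upwards [eventually_le_atBot 0] with x hx
    have h1 : ∫ t in x..0, f t = ∫ t in x..0, (1:ℝ) := by
      refine intervalIntegral.integral_congr fun t ht => ?_
      rw [uIcc_of_le hx] at ht
      simp only [hf]
      rw [if_neg (fun h => not_lt_of_ge ht.2 h.1)]
    rw [← Ssub] at h1
    simp [S0] at h1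
    simp [h1]
  have Ssurj : Function.Surjective S := Scont.surjective Stop Sbot
  let e := StrictMono.orderIsoOfSurjective S Smono Ssurj
  have he : ∀ x, e.symm (S x) = x := fun x => e.symm_apply_apply x
  have he' : ∀ x, S (e.symm x) = x := fun x => e.apply_symm_apply x
  refine ⟨hpos, ?_, fun s => e.symm (γ - s), ?_, ?_, ?_, ?_⟩
  · intro a ha b hb
    refine (fint a b).congr_ae ?_
    refine (ae_restrict_iff' measurableSet_uIoc).2 ?_
    filter_upwards [feq] with x hx hx'
    refine hx ⟨?_, ?_⟩
    · rw [uIoc, mem_Ioc] at hx'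
      exact lt_of_le_of_lt (le_inf ha.1 hb.1) hx'.1
    · exact hx'.2.trans (sup_le ha.2 hb.2)
  · exact e.symm.continuous.comp (by fun_prop)
  · simp [← SM, he]
  · have := he 0
    rw [S0] at this
    simpa using this
  · intro s hs
    have hx : e.symm (γ - s) ∈ Ioo 0 M := by
      constructor
      · rw [← Smono.lt_iff_lt, he', S0]; linarith [hs.2]
      · rw [← Smono.lt_iff_lt, he', SM]; linarith [hs.1]
    refine ⟨hx, ?_⟩
    set x := e.symm (γ - s) with hxdef
    have hcf : ContinuousAt f x := by
      have : ContinuousAt (fun x => (F x) ^ (-(1/2) : ℝ)) x :=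
        (hF x hx.1).continuousAt.rpow_const (Or.inl (hpos x hx).ne')
      refine this.congr ?_
      filter_upwards [isOpen_Ioo.mem_nhds hx] with t ht
      simp only [hf]; rw [if_pos ht]
    have hSd : HasDerivAt S (f x) x :=
      intervalIntegral.integral_hasDerivAt_right (fint _ _)
        (fmeas.stronglyMeasurable.stronglyMeasurableAtFilter) hcf
    have hfx : f x = (√(F x))⁻¹ := by
      simp only [hf]; rw [if_pos hx, rpow_neg (hpos x hx).le, sqrt_eq_rpow]
    have hd : HasDerivAt e.symm (f x)⁻¹ (γ - s) :=
      HasDerivAt.of_local_left_inverse e.symm.continuous.continuousAt hSd (fpos x).ne'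
        (Eventually.of_forall he')
    have := hd.comp s ((hasDerivAt_id s).const_sub γ)
    rw [hfx, inv_inv, mul_neg_one] at this
    exact this

lemma rp23 {x : ℝ} (hx : 0 < x) : x ^ (2/3 : ℝ) = x * x ^ (-(1/3) : ℝ) := by
  rw [← rpow_one_add' hx.le (by norm_num)]; norm_num

lemma rp43 {x : ℝ} (hx : 0 < x) : x ^ (-(1/3) - 1 : ℝ) = x ^ (-(1/3) : ℝ) / x := by
  rw [rpow_sub_one hx.ne']

/-- the first-order profile -/
noncomputable def FF (ε y x : ℝ) : ℝ :=
  if x ≤ y then 36 * π - 27 * (1 - ε) * y ^ (2/3 : ℝ) - 9 * ε * x ^ (2/3 : ℝ)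
  else 36 * π - 18 * (1 - ε) * y * x ^ (-(1/3) : ℝ) - 9 * x ^ (2/3 : ℝ)

/-- its derivative -/
noncomputable def GG (ε y x : ℝ) : ℝ :=
  min (6 * (1 - ε) * y * (x ^ (-(1/3) : ℝ) / x) - 6 * x ^ (-(1/3) : ℝ)) (-6 * ε * x ^ (-(1/3) : ℝ))

lemma FF_of_le {ε y x : ℝ} (h : x ≤ y) :
    FF ε y x = 36 * π - 27 * (1 - ε) * y ^ (2/3 : ℝ) - 9 * ε * x ^ (2/3 : ℝ) := if_pos h

lemma FF_of_ge {ε y x : ℝ} (hx : 0 < x) (h : y ≤ x) :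
    FF ε y x = 36 * π - 18 * (1 - ε) * y * x ^ (-(1/3) : ℝ) - 9 * x ^ (2/3 : ℝ) := by
  rcases h.eq_or_lt with h | h
  · subst h
    rw [FF_of_le le_rfl, rp23 hx]; ring
  · exact if_neg (not_le.2 h)

lemma GG_of_le {ε y x : ℝ} (hε : ε < 1) (hx : 0 < x) (h : x ≤ y) :
    GG ε y x = -6 * ε * x ^ (-(1/3) : ℝ) := by
  refine min_eq_right ?_
  have hq : 0 < x ^ (-(1/3) : ℝ) := rpow_pos_of_pos hx _
  have h1 : 1 ≤ y / x := by rwa [one_le_div hx]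
  have : 0 ≤ 6 * (1 - ε) * x ^ (-(1/3) : ℝ) * (y / x - 1) :=
    mul_nonneg (mul_nonneg (by linarith) hq.le) (by linarith)
  have e : 6 * (1 - ε) * x ^ (-(1/3) : ℝ) * (y / x - 1) =
    6 * (1 - ε) * y * (x ^ (-(1/3) : ℝ) / x) - 6 * (1 - ε) * x ^ (-(1/3) : ℝ) := by ring
  linarith

lemma GG_of_ge {ε y x : ℝ} (hε : ε < 1) (hx : 0 < x) (h : y ≤ x) :
    GG ε y x = 6 * (1 - ε) * y * (x ^ (-(1/3) : ℝ) / x) - 6 * x ^ (-(1/3) : ℝ) := by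
  refine min_eq_left ?_
  have hq : 0 < x ^ (-(1/3) : ℝ) := rpow_pos_of_pos hx _
  have h1 : y / x ≤ 1 := by rwa [div_le_one hx]
  have : 0 ≤ 6 * (1 - ε) * x ^ (-(1/3) : ℝ) * (1 - y / x) :=
    mul_nonneg (mul_nonneg (by linarith) hq.le) (by linarith)
  have e : 6 * (1 - ε) * x ^ (-(1/3) : ℝ) * (1 - y / x) =
    6 * (1 - ε) * x ^ (-(1/3) : ℝ) - 6 * (1 - ε) * y * (x ^ (-(1/3) : ℝ) / x) := by ring
  linarith

lemma FF_deriv {ε y x : ℝ} (hε : ε < 1) (hx : 0 < x) : HasDerivAt (FF ε y) (GG ε y x) x := by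
  have h23 : HasDerivAt (fun x : ℝ => x ^ (2/3 : ℝ)) ((2/3) * x ^ (-(1/3) : ℝ)) x := by
    have := Real.hasDerivAt_rpow_const (x := x) (p := (2/3 : ℝ)) (Or.inl hx.ne')
    convert this using 3; norm_num
  have h13 : HasDerivAt (fun x : ℝ => x ^ (-(1/3) : ℝ)) (-(1/3) * (x ^ (-(1/3) : ℝ) / x)) x := by
    have := Real.hasDerivAt_rpow_const (x := x) (p := (-(1/3) : ℝ)) (Or.inl hx.ne')
    rwa [rp43 hx] at this
  have hlo : HasDerivAt (fun x => 36 * π - 27 * (1 - ε) * y ^ (2/3 : ℝ) - 9 * ε * x ^ (2/3 : ℝ))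
      (-6 * ε * x ^ (-(1/3) : ℝ)) x := by
    refine ((h23.const_mul (9 * ε)).const_sub (36 * π - 27 * (1 - ε) * y ^ (2/3 : ℝ))).congr_deriv ?_
    ring
  have hup : HasDerivAt (fun x => 36 * π - 18 * (1 - ε) * y * x ^ (-(1/3) : ℝ) - 9 * x ^ (2/3 : ℝ))
      (6 * (1 - ε) * y * (x ^ (-(1/3) : ℝ) / x) - 6 * x ^ (-(1/3) : ℝ)) x := by
    refine (((h13.const_mul (18 * (1 - ε) * y)).const_sub (36 * π)).sub (h23.const_mul 9)).congr_deriv ?_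
    ring
  have e1 : x ≤ y → HasDerivWithinAt (FF ε y) (GG ε y x) (Iic y) x := by
    intro h
    rw [GG_of_le hε hx h]
    exact hlo.hasDerivWithinAt.congr (fun t ht => FF_of_le ht) (FF_of_le h)
  have e2 : y ≤ x → HasDerivWithinAt (FF ε y) (GG ε y x) (Ici y ∩ Ioi 0) x := by
    intro h
    rw [GG_of_ge hε hx h]
    exact hup.hasDerivWithinAt.congr (fun t ht => FF_of_ge ht.2 ht.1) (FF_of_ge hx h)
  rcases lt_trichotomy x y with h | h | h
  · exact (e1 h.le).hasDerivAt (Iic_mem_nhds h)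
  · refine ((e1 h.le).union (e2 h.ge)).hasDerivAt ?_
    filter_upwards [Ioi_mem_nhds hx] with t ht
    rcases le_total t y with h' | h'
    · exact Or.inl h'
    · exact Or.inr ⟨h', ht⟩
  · exact (e2 h.le).hasDerivAt (inter_mem (Ici_mem_nhds h) (Ioi_mem_nhds hx))

lemma GG_cont (ε y : ℝ) : ContinuousOn (GG ε y) (Ioi 0) := by
  have hq : ContinuousOn (fun x : ℝ => x ^ (-(1/3) : ℝ)) (Ioi 0) :=
    continuousOn_id.rpow_const (fun x hx => Or.inl (ne_of_gt hx))
  have hq2 : ContinuousOn (fun x : ℝ => x ^ (-(1/3) : ℝ) / x) (Ioi 0) :=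
    hq.div continuousOn_id (fun x hx => ne_of_gt hx)
  exact ContinuousOn.inf ((hq2.const_mul _).sub (hq.const_mul _)) (hq.const_mul _)

lemma FF_meas (ε y : ℝ) : Measurable (FF ε y) :=
  Measurable.ite measurableSet_Iic (by fun_prop) (by fun_prop)

lemma GG_half {ε y x : ℝ} (hε : ε < 1) (hx : 0 < x) :
    GG ε y x / 2 = min ((36 * π - FF ε y x) / (6 * x) - (9/2) * x ^ (-(1/3) : ℝ))
                (-3 * ε * x ^ (-(1/3) : ℝ)) := by
  have hq : 0 < x ^ (-(1/3) : ℝ) := rpow_pos_of_pos hx _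
  rcases le_total x y with h | h
  · rw [min_eq_right, GG_of_le hε hx h]; · ring
    rw [FF_of_le h]
    have h1 : x ^ (2/3 : ℝ) ≤ y ^ (2/3 : ℝ) := rpow_le_rpow hx.le h (by norm_num)
    rw [rp23 hx] at h1 ⊢
    have e : (36 * π - (36 * π - 27 * (1 - ε) * y ^ (2/3 : ℝ) - 9 * ε * (x * x ^ (-(1/3) : ℝ)))) / (6 * x)
      - (9/2) * x ^ (-(1/3) : ℝ) - (-3 * ε * x ^ (-(1/3) : ℝ))
      = (9/2) * (1 - ε) * (y ^ (2/3 : ℝ) - x * x ^ (-(1/3) : ℝ)) / x := by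
      field_simp; ring
    have : 0 ≤ (9/2) * (1 - ε) * (y ^ (2/3 : ℝ) - x * x ^ (-(1/3) : ℝ)) / x :=
      div_nonneg (mul_nonneg (by linarith) (by linarith)) hx.le
    linarith
  · have e : (36 * π - FF ε y x) / (6 * x) - (9/2) * x ^ (-(1/3) : ℝ) =
        (6 * (1 - ε) * y * (x ^ (-(1/3) : ℝ) / x) - 6 * x ^ (-(1/3) : ℝ)) / 2 := by
      rw [FF_of_ge hx h, rp23 hx]; field_simp; ring
    rw [e, ← GG_of_ge hε hx h, min_eq_left]
    have : GG ε y x ≤ -6 * ε * x ^ (-(1/3) : ℝ) := min_le_right _ _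
    linarith

/-- For `ε ∈ (0,1)` and `z ∈ (4π/(3−2ε), 4π]`, there is a continuously differentiable
function `h : (0, γ(z)) → (0, z^{3/2})` with `h → z^{3/2}` at `0`, `h → 0` at `γ(z)`,
`h' → 0` at `0`, satisfying the stated piecewise first-order ODE; moreover `h` is twice
continuously differentiable and satisfies
`h'' = min{(36π − (h')²)/(6h) − (9/2) h^{−1/3}, −3ε h^{−1/3}}` on `(0, γ(z))`. -/
theorem stmt_7 (ε z : ℝ) (hε : ε ∈ Set.Ioo (0:ℝ) 1)
    (hz : z ∈ Set.Ioc (4 * π / (3 - 2 * ε)) (4 * π)) :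
    ∃ h : ℝ → ℝ,
      (∀ s ∈ Set.Ioo (0:ℝ) (gammaHigh ε z), h s ∈ Set.Ioo (0:ℝ) (z ^ (3/2 : ℝ))) ∧
      ContDiffOn ℝ 2 h (Set.Ioo (0:ℝ) (gammaHigh ε z)) ∧
      Filter.Tendsto h (nhdsWithin 0 (Set.Ioo (0:ℝ) (gammaHigh ε z)))
        (nhds (z ^ (3/2 : ℝ))) ∧
      Filter.Tendsto h (nhdsWithin (gammaHigh ε z) (Set.Ioo (0:ℝ) (gammaHigh ε z)))
        (nhds 0) ∧
      Filter.Tendsto (deriv h) (nhdsWithin 0 (Set.Ioo (0:ℝ) (gammaHigh ε z))) (nhds 0) ∧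
      (∀ s ∈ Set.Ioo (0:ℝ) (gammaHigh ε z),
        (yFn ε z ≤ h s →
          deriv h s = -Real.sqrt (36 * π - 18 * (1 - ε) * (yFn ε z) * (h s) ^ (-(1/3) : ℝ)
            - 9 * (h s) ^ (2/3 : ℝ))) ∧
        (h s ≤ yFn ε z →
          deriv h s = -Real.sqrt (36 * π - 27 * (1 - ε) * (yFn ε z) ^ (2/3 : ℝ)
            - 9 * ε * (h s) ^ (2/3 : ℝ)))) ∧
      (∀ s ∈ Set.Ioo (0:ℝ) (gammaHigh ε z),
        deriv (deriv h) s
          = min ((36 * π - (deriv h s) ^ 2) / (6 * h s) - (9/2) * (h s) ^ (-(1/3) : ℝ))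
                (-3 * ε * (h s) ^ (-(1/3) : ℝ))) := by
  obtain ⟨hε0, hε1⟩ := hε
  obtain ⟨hz1, hz2⟩ := hz
  have hz0 : 0 < z := lt_trans (div_pos (by positivity) (by linarith)) hz1
  rw [div_lt_iff₀ (by linarith)] at hz1
  set y := yFn ε z with hy
  set M := z ^ (3/2 : ℝ) with hM
  have hM0 : 0 < M := rpow_pos_of_pos hz0 _
  have hr : 0 < z ^ (1/2 : ℝ) := rpow_pos_of_pos hz0 _
  have hMr : M = z * z ^ (1/2 : ℝ) := by
    rw [hM, ← rpow_one_add' hz0.le (by norm_num)]; norm_num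
  have hM13 : M ^ (-(1/3) : ℝ) = (z ^ (1/2 : ℝ))⁻¹ := by
    rw [hM, ← rpow_mul hz0.le, ← rpow_neg hz0.le]; norm_num
  have hy0 : 0 ≤ y := div_nonneg (mul_nonneg hr.le (by linarith)) (by linarith)
  have hyM : y < M := by
    rw [hy, yFn, hMr, div_lt_iff₀ (by linarith)]
    have : z ^ (1/2 : ℝ) * (4 * π - z) < z ^ (1/2 : ℝ) * (z * (2 * (1 - ε))) :=
      mul_lt_mul_of_pos_left (by linarith) hr
    linarith
  have hFM : FF ε y M = 0 := by
    have h1e : 1 - ε ≠ 0 := by linarith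
    rw [FF_of_ge hM0 hyM.le, rp23 hM0, hM13, hMr, hy, yFn]
    field_simp; ring
  have hc : 0 < 6 * ε * M ^ (-(1/3) : ℝ) := by positivity
  have hGle : ∀ x ∈ Ioc 0 M, GG ε y x ≤ -(6 * ε * M ^ (-(1/3) : ℝ)) := by
    intro x hx
    refine (min_le_right _ _).trans ?_
    have := rpow_le_rpow_of_nonpos hx.1 hx.2 (show (-(1/3) : ℝ) ≤ 0 by norm_num)
    have := mul_le_mul_of_nonneg_left this (show 0 ≤ 6 * ε by linarith)
    linarith
  obtain ⟨hpos, hint, h, hcont, h0, hγ0, hh⟩ := core_inv (FF ε y) (GG ε y) M _ _ hM0 hc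
    (FF_meas ε y) (fun x hx => FF_deriv hε1 hx) hGle hFM rfl
  have hγ : gammaHigh ε z = ∫ x in (0:ℝ)..M, (FF ε y x) ^ (-(1/2) : ℝ) := by
    rw [← intervalIntegral.integral_add_adjacent_intervals
      (hint 0 ⟨le_rfl, hM0.le⟩ y ⟨hy0, hyM.le⟩) (hint y ⟨hy0, hyM.le⟩ M ⟨hM0.le, le_rfl⟩)]
    unfold gammaHigh
    congr 1
    · refine intervalIntegral.integral_congr fun x hx => ?_
      rw [uIcc_of_le hy0] at hx
      simp only [FF_of_le hx.2]; rfl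
    · refine intervalIntegral.integral_congr_ae (Eventually.of_forall fun x hx => ?_)
      rw [uIoc_of_le hyM.le] at hx
      rw [FF_of_ge (hy0.trans_lt hx.1) hx.1.le]
  rw [← hγ] at hγ0 hh
  clear hint
  set γ := gammaHigh ε z
  have hd1 : ∀ s ∈ Ioo 0 γ, deriv h s = -√(FF ε y (h s)) := fun s hs => (hh s hs).2.deriv
  have hd2 : ∀ s ∈ Ioo 0 γ, HasDerivAt (deriv h) (GG ε y (h s) / 2) s := by
    intro s hs
    obtain ⟨hm, hd⟩ := hh s hs
    have hp := hpos _ hm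
    have h1 : HasDerivAt (fun t => -√(FF ε y (h t))) (GG ε y (h s) / 2) s := by
      refine (((FF_deriv hε1 hm.1).comp s hd).sqrt hp.ne').neg.congr_deriv ?_
      have : √(FF ε y (h s)) ≠ 0 := (sqrt_pos.2 hp).ne'
      simp only [Function.comp]
      field_simp
    refine h1.congr_of_eventuallyEq ?_
    filter_upwards [isOpen_Ioo.mem_nhds hs] with t ht using hd1 t ht
  refine ⟨h, fun s hs => (hh s hs).1, ?_, ?_, ?_, ?_, ?_, ?_⟩
  · rw [show (2 : WithTop ℕ∞) = 1 + 1 by norm_num, contDiffOn_succ_iff_deriv_of_isOpen isOpen_Ioo]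
    refine ⟨fun s hs => (hh s hs).2.differentiableAt.differentiableWithinAt, by simp, ?_⟩
    rw [show (1 : WithTop ℕ∞) = 0 + 1 by norm_num, contDiffOn_succ_iff_deriv_of_isOpen isOpen_Ioo]
    refine ⟨fun s hs => (hd2 s hs).differentiableAt.differentiableWithinAt, by simp, ?_⟩
    rw [contDiffOn_zero]
    have : ContinuousOn (fun s => GG ε y (h s) / 2) (Ioo 0 γ) :=
      ((GG_cont ε y).comp hcont.continuousOn (fun s hs => (hh s hs).1.1)).div_const _
    exact this.congr (fun s hs => (hd2 s hs).deriv)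
  · have := hcont.tendsto 0
    rw [h0] at this
    exact this.mono_left nhdsWithin_le_nhds
  · have := hcont.tendsto γ
    rw [hγ0] at this
    exact this.mono_left nhdsWithin_le_nhds
  · have h1 : ContinuousAt (fun s => -√(FF ε y (h s))) 0 := by
      have h2 : ContinuousAt (FF ε y) (h 0) := by
        rw [h0]; exact (FF_deriv hε1 hM0).continuousAt
      exact (ContinuousAt.comp (f := h) (g := FF ε y) h2 hcont.continuousAt).sqrt.neg
    have h3 := h1.tendsto
    simp only [h0, hFM, sqrt_zero, neg_zero] at h3
    refine (h3.mono_left nhdsWithin_le_nhds).congr' ?_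
    filter_upwards [self_mem_nhdsWithin] with s hs using (hd1 s hs).symm
  · intro s hs
    refine ⟨fun hle => ?_, fun hle => ?_⟩
    · rw [hd1 s hs, FF_of_ge (hh s hs).1.1 hle]
    · rw [hd1 s hs, FF_of_le hle]
  · intro s hs
    have hp := hpos _ (hh s hs).1
    rw [(hd2 s hs).deriv, hd1 s hs, neg_sq, sq_sqrt hp.le]
    exact GG_half hε1 (hh s hs).1.1
end

section
/- Let ε ∈ (0,1), let z ∈ (0, 4π/(3−2ε)], let h ∈ (0, z^{3/2}], and let p ∈ ℝ satisfy p² = 9εz − 9ε h^{2/3}. Then −3ε h^{−1/3} ≤ (36π − p²)/(6h) − (9/2) h^{−1/3}. -/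
open Real

/-- Pointwise inequality: if `ε ∈ (0,1)`, `z ∈ (0, 4π/(3−2ε)]`, `h ∈ (0, z^{3/2}]`, and
`p² = 9εz − 9ε h^{2/3}`, then `−3ε h^{−1/3} ≤ (36π − p²)/(6h) − (9/2) h^{−1/3}`. -/
theorem stmt_8 (ε z h p : ℝ) (hε : ε ∈ Set.Ioo (0:ℝ) 1)
    (hz : z ∈ Set.Ioc (0:ℝ) (4 * π / (3 - 2 * ε)))
    (hh : h ∈ Set.Ioc (0:ℝ) (z ^ (3/2 : ℝ)))
    (hp : p ^ 2 = 9 * ε * z - 9 * ε * h ^ (2/3 : ℝ)) :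
    -3 * ε * h ^ (-(1/3) : ℝ)
      ≤ (36 * π - p ^ 2) / (6 * h) - (9/2) * h ^ (-(1/3) : ℝ) := by
  obtain ⟨h0, h1⟩ := hε
  obtain ⟨z0, z1⟩ := hz
  obtain ⟨hh0, hh1⟩ := hh
  have hz2 : z * (3 - 2 * ε) ≤ 4 * π := (le_div_iff₀ (by linarith)).1 z1
  have hs : h ^ (2/3 : ℝ) ≤ z := by
    have h2 := Real.rpow_le_rpow hh0.le hh1 (by norm_num : (0:ℝ) ≤ 2/3)
    rw [← Real.rpow_mul z0.le] at h2
    norm_num at h2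
    exact h2
  have hq : h ^ (-(1/3) : ℝ) = h ^ (2/3 : ℝ) / h := by
    rw [← Real.rpow_sub_one hh0.ne']
    norm_num
  rw [hq, hp]
  set s := h ^ (2/3 : ℝ)
  have key : 0 ≤ (36 * π - 9 * ε * z - 27 * (1 - ε) * s) / (6 * h) := by
    apply div_nonneg _ (by linarith)
    nlinarith [mul_le_mul_of_nonneg_left hs (by linarith : 0 ≤ 1 - ε)]
  have e : (36 * π - (9 * ε * z - 9 * ε * s)) / (6 * h) - 9 / 2 * (s / h) - (-3 * ε * (s / h))
      = (36 * π - 9 * ε * z - 27 * (1 - ε) * s) / (6 * h) := by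
    field_simp
    ring
  linarith
end

section
/- Define σ : [0, π/2] → [0, π²] by σ(r) = 2πr − π sin(2r). Then σ is a strictly increasing bijection from [0, π/2] onto [0, π²], and the function h : (0, π²) → (0, (4π)^{3/2}) defined by h(s) = (4π)^{3/2} sin³(σ^{−1}(π² − s)) is differentiable and satisfies h'(s) = −(36π − 9 h(s)^{2/3})^{1/2} for all s ∈ (0, π²), with lim_{s→0⁺} h(s) = (4π)^{3/2} and lim_{s→π²⁻} h(s) = 0. Equivalently, h(π² − 2πr + π sin(2r)) = (4π)^{3/2} sin³(r) for all r ∈ (0, π/2). -/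
open Real Set Filter

/-- `σ(r) = 2πr − π sin(2r)`. -/
noncomputable def sigmaFn (r : ℝ) : ℝ := 2 * π * r - π * Real.sin (2 * r)

/-- The explicit solution `h(s) = (4π)^{3/2} sin³(σ⁻¹(π² − s))` of the ODE
`h' = −(36π − 9h^{2/3})^{1/2}`, where `σ⁻¹` is the inverse of `σ` on `[0, π/2]`. -/
noncomputable def hFn (s : ℝ) : ℝ :=
  (4 * π) ^ (3/2 : ℝ) *
    (Real.sin (Function.invFunOn sigmaFn (Set.Icc 0 (π / 2)) (π ^ 2 - s))) ^ 3

lemma aux_deriv (r : ℝ) : HasDerivAt sigmaFn (4 * π * Real.sin r ^ 2) r := by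
  have h1 : HasDerivAt (fun x : ℝ => 2 * x) 2 r := by
    simpa using (hasDerivAt_id r).const_mul (2:ℝ)
  have h2 := ((hasDerivAt_id r).const_mul (2 * π)).sub ((h1.sin).const_mul π)
  refine h2.congr_deriv ?_
  rw [Real.cos_two_mul, Real.cos_sq']
  ring

lemma aux_mono : StrictMonoOn sigmaFn (Set.Icc 0 (π / 2)) := by
  refine strictMonoOn_of_deriv_pos (convex_Icc _ _)
    (fun x _ => (aux_deriv x).continuousAt.continuousWithinAt) fun x hx => ?_
  rw [interior_Icc] at hx
  rw [(aux_deriv x).deriv]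
  have := Real.sin_pos_of_pos_of_lt_pi hx.1 (by linarith [hx.2, Real.pi_pos])
  have := Real.pi_pos
  positivity

lemma aux_zero : sigmaFn 0 = 0 := by simp [sigmaFn]

lemma aux_end : sigmaFn (π / 2) = π ^ 2 := by
  have : 2 * (π / 2) = π := by ring
  simp only [sigmaFn, this, Real.sin_pi]
  ring

lemma aux_bij : Set.BijOn sigmaFn (Set.Icc 0 (π / 2)) (Set.Icc 0 (π ^ 2)) := by
  have hp := Real.pi_pos
  refine ⟨fun x hx => ⟨?_, ?_⟩, aux_mono.injOn, ?_⟩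
  · rw [← aux_zero]
    exact aux_mono.monotoneOn ⟨le_refl _, by positivity⟩ hx hx.1
  · rw [← aux_end]
    exact aux_mono.monotoneOn hx ⟨by positivity, le_refl _⟩ hx.2
  · have := intermediate_value_Icc (f := sigmaFn) (a := 0) (b := π / 2) (by positivity)
      (fun x _ => (aux_deriv x).continuousAt.continuousWithinAt)
    rwa [aux_zero, aux_end] at this

noncomputable def tauFn (y : ℝ) : ℝ := Function.invFunOn sigmaFn (Set.Icc 0 (π / 2)) y

lemma tau_mem {y : ℝ} (hy : y ∈ Set.Icc 0 (π ^ 2)) : tauFn y ∈ Set.Icc 0 (π / 2) :=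
  aux_bij.surjOn.mapsTo_invFunOn hy

lemma sigma_tau {y : ℝ} (hy : y ∈ Set.Icc 0 (π ^ 2)) : sigmaFn (tauFn y) = y :=
  aux_bij.invOn_invFunOn.2 hy

lemma tau_sigma {r : ℝ} (hr : r ∈ Set.Icc 0 (π / 2)) : tauFn (sigmaFn r) = r :=
  aux_bij.invOn_invFunOn.1 hr

lemma tau_cont : ContinuousOn tauFn (Set.Icc 0 (π ^ 2)) := by
  rw [continuousOn_iff_isClosed]
  intro C hC
  refine ⟨sigmaFn '' (C ∩ Set.Icc 0 (π / 2)), ?_, ?_⟩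
  · refine ((isCompact_Icc.inter_left hC).image_of_continuousOn ?_).isClosed
    exact fun x _ => (aux_deriv x).continuousAt.continuousWithinAt
  · ext y
    constructor
    · rintro ⟨h1, h2⟩
      exact ⟨⟨tauFn y, ⟨h1, tau_mem h2⟩, sigma_tau h2⟩, h2⟩
    · rintro ⟨⟨r, ⟨h1, h3⟩, rfl⟩, h2⟩
      refine ⟨?_, h2⟩
      rw [Set.mem_preimage, tau_sigma h3]
      exact h1

lemma tau_mem' {y : ℝ} (hy : y ∈ Set.Ioo 0 (π ^ 2)) : tauFn y ∈ Set.Ioo 0 (π / 2) := by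
  have h := tau_mem (Ioo_subset_Icc_self hy)
  have h' := sigma_tau (Ioo_subset_Icc_self hy)
  refine ⟨lt_of_le_of_ne h.1 fun h0 => ?_, lt_of_le_of_ne h.2 fun h0 => ?_⟩
  · rw [← h0, aux_zero] at h'
    exact hy.1.ne h'
  · rw [h0, aux_end] at h'
    exact hy.2.ne h'.symm

lemma tau_deriv {y : ℝ} (hy : y ∈ Set.Ioo 0 (π ^ 2)) :
    HasDerivAt tauFn (4 * π * Real.sin (tauFn y) ^ 2)⁻¹ y := by
  have hm := tau_mem' hy
  have hs := Real.sin_pos_of_pos_of_lt_pi hm.1 (by linarith [hm.2, Real.pi_pos])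
  have hp := Real.pi_pos
  refine HasDerivAt.of_local_left_inverse
    (tau_cont.continuousAt (Icc_mem_nhds hy.1 hy.2)) (aux_deriv _) (by positivity) ?_
  filter_upwards [Icc_mem_nhds hy.1 hy.2] with z hz using sigma_tau hz

lemma hFn_eq : hFn = fun s => (4 * π) ^ (3/2 : ℝ) * Real.sin (tauFn (π ^ 2 - s)) ^ 3 := rfl

lemma hFn_cont : ContinuousOn hFn (Set.Icc 0 (π ^ 2)) := by
  rw [hFn_eq]
  have h : ContinuousOn (fun s => tauFn (π ^ 2 - s)) (Set.Icc 0 (π ^ 2)) :=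
    tau_cont.comp (by fun_prop) fun s hs => ⟨by linarith [hs.2], by linarith [hs.1]⟩
  fun_prop

lemma four_pi_rpow : (4 * π) ^ (3/2 : ℝ) = Real.sqrt (4 * π) ^ 3 := by
  have hp := Real.pi_pos
  rw [Real.sqrt_eq_rpow, ← Real.rpow_natCast, ← Real.rpow_mul (by positivity)]
  norm_num

lemma cube_rpow {x : ℝ} (hx : 0 ≤ x) : (x ^ 3) ^ (2/3 : ℝ) = x ^ 2 := by
  rw [← Real.rpow_natCast, ← Real.rpow_mul hx, ← Real.rpow_natCast]
  norm_num

/-- `σ` is a strictly increasing bijection from `[0, π/2]` onto `[0, π²]`, and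
`h(s) = (4π)^{3/2} sin³(σ⁻¹(π² − s))` is differentiable on `(0, π²)` with
`h'(s) = −(36π − 9 h(s)^{2/3})^{1/2}`, `h → (4π)^{3/2}` at `0`, `h → 0` at `π²`;
equivalently `h(π² − 2πr + π sin(2r)) = (4π)^{3/2} sin³(r)` for `r ∈ (0, π/2)`. -/
theorem stmt_11 :
    StrictMonoOn sigmaFn (Set.Icc 0 (π / 2)) ∧
    Set.BijOn sigmaFn (Set.Icc 0 (π / 2)) (Set.Icc 0 (π ^ 2)) ∧
    (∀ s ∈ Set.Ioo (0:ℝ) (π ^ 2),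
      hFn s ∈ Set.Ioo (0:ℝ) ((4 * π) ^ (3/2 : ℝ)) ∧
      HasDerivAt hFn (-Real.sqrt (36 * π - 9 * (hFn s) ^ (2/3 : ℝ))) s) ∧
    Filter.Tendsto hFn (nhdsWithin 0 (Set.Ioo (0:ℝ) (π ^ 2)))
      (nhds ((4 * π) ^ (3/2 : ℝ))) ∧
    Filter.Tendsto hFn (nhdsWithin (π ^ 2) (Set.Ioo (0:ℝ) (π ^ 2))) (nhds 0) ∧
    ∀ r ∈ Set.Ioo (0:ℝ) (π / 2),
      hFn (π ^ 2 - 2 * π * r + π * Real.sin (2 * r))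
        = (4 * π) ^ (3/2 : ℝ) * (Real.sin r) ^ 3 := by
  have hp := Real.pi_pos
  refine ⟨aux_mono, aux_bij, ?_, ?_, ?_, ?_⟩
  · intro s hs
    have hy : π ^ 2 - s ∈ Set.Ioo 0 (π ^ 2) := ⟨by linarith [hs.2], by linarith [hs.1]⟩
    have hm := tau_mem' hy
    have hd : HasDerivAt hFn _ s := (((tau_deriv hy).comp s
      ((hasDerivAt_id s).const_sub (π ^ 2))).sin.pow 3).const_mul ((4 * π) ^ (3/2 : ℝ))
    have hv : hFn s = (4 * π) ^ (3/2 : ℝ) * Real.sin (tauFn (π ^ 2 - s)) ^ 3 := rfl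
    simp only [Function.comp, id] at hd
    generalize tauFn (π ^ 2 - s) = r at *
    have hs0 := Real.sin_pos_of_pos_of_lt_pi hm.1 (by linarith [hm.2])
    have hc0 := Real.cos_pos_of_mem_Ioo ⟨by linarith [hm.1], hm.2⟩
    have hsc := Real.sin_sq_add_cos_sq r
    have hs1 : Real.sin r < 1 := by nlinarith
    have hq2 : Real.sqrt (4 * π) ^ 2 = 4 * π := Real.sq_sqrt (by positivity)
    have hq : 0 < Real.sqrt (4 * π) := Real.sqrt_pos.2 (by positivity)
    refine ⟨?_, ?_⟩
    · rw [hv]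
      have hA : 0 < (4 * π) ^ (3/2 : ℝ) := by positivity
      refine ⟨by positivity, ?_⟩
      have : Real.sin r ^ 3 < 1 := pow_lt_one₀ hs0.le hs1 (by norm_num)
      nlinarith
    · refine hd.congr_deriv ?_
      rw [hv, four_pi_rpow]
      generalize Real.sqrt (4 * π) = q at *
      rw [← mul_pow, cube_rpow (by positivity)]
      have : 36 * π - 9 * (q * Real.sin r) ^ 2 = (3 * q * Real.cos r) ^ 2 := by
        have : Real.cos r ^ 2 = 1 - Real.sin r ^ 2 := by linarith
        rw [mul_pow, mul_pow, mul_pow, this, hq2]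
        ring
      rw [this, Real.sqrt_sq (by positivity), ← hq2]
      field_simp
      norm_num
      ring
  · have h := (hFn_cont 0 ⟨le_refl _, by positivity⟩).mono Ioo_subset_Icc_self
    have e : hFn 0 = (4 * π) ^ (3/2 : ℝ) := by
      have : tauFn (π ^ 2) = π / 2 := by
        rw [← aux_end]; exact tau_sigma ⟨by positivity, le_refl _⟩
      simp [hFn_eq, this]
    rw [← e]; exact h
  · have h := (hFn_cont (π ^ 2) ⟨by positivity, le_refl _⟩).mono Ioo_subset_Icc_self
    have e : hFn (π ^ 2) = 0 := by
      have : tauFn 0 = 0 := by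
        conv_lhs => rw [← aux_zero]
        exact tau_sigma ⟨le_refl _, by positivity⟩
      simp [hFn_eq, this]
    unfold ContinuousWithinAt at h
    rwa [e] at h
  · intro r hr
    have : π ^ 2 - (π ^ 2 - 2 * π * r + π * Real.sin (2 * r)) = sigmaFn r := by
      unfold sigmaFn; ring
    simp only [hFn_eq, this, tau_sigma (Ioo_subset_Icc_self hr)]
end
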